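/- arXiv:0810.4766 — 4 statements merged into one kernel-verified Lean document; each statement's English description precedes it below -/
import Mathlib

section
/- For every integer k ≥ 0, the space 𝓐̂ₖ of n-tuples of homogeneous polynomials of degree k decomposes as the internal direct sum 𝓐̂ₖ = Ĥₖ ⊕ (x₁² + ⋯ + xₙ²)·𝓐̂_{k−2} of ℝ-vector subspaces, where Ĥₖ is the space of solutions of the Navier equations in 𝓐̂ₖ and 𝓐̂_{k−2} is interpreted as {0} when k < 2. -/
open MvPolynomial

/-- The Laplacian `Δ = ∑ᵣ ∂²_{xᵣ}` on `ℝ[x₁,…,xₙ]`. -/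
noncomputable def lap {n : ℕ} (p : MvPolynomial (Fin n) ℝ) : MvPolynomial (Fin n) ℝ :=
  ∑ r : Fin n, pderiv r (pderiv r p)

/-- The Navier operator `N(u)ⱼ = Δuⱼ + b·∂_{xⱼ}(∑ᵣ ∂_{xᵣ} uᵣ)`. -/
noncomputable def navier {n : ℕ} (b : ℝ) (u : Fin n → MvPolynomial (Fin n) ℝ) :
    Fin n → MvPolynomial (Fin n) ℝ :=
  fun j => lap (u j) + b • pderiv j (∑ r : Fin n, pderiv r (u r))

/-- Membership in `(x₁²+⋯+xₙ²)·𝓐̂_{k-2}`, interpreted as `{0}` when `k < 2`. -/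
def inQA {n : ℕ} (k : ℕ) (w : Fin n → MvPolynomial (Fin n) ℝ) : Prop :=
  if 2 ≤ k then
    ∃ v : Fin n → MvPolynomial (Fin n) ℝ,
      (∀ j, (v j).IsHomogeneous (k - 2)) ∧
        w = fun j => (∑ r : Fin n, X r ^ 2) * v j
  else w = 0

section Laplacian

variable {n : ℕ}

theorem pderiv_pderiv_comm (i j : Fin n) (p : MvPolynomial (Fin n) ℝ) :
    pderiv i (pderiv j p) = pderiv j (pderiv i p) := by
  have h : ⁅pderiv (R := ℝ) i, pderiv (R := ℝ) j⁆ = 0 := by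
    refine derivation_ext fun k => ?_
    simp only [Derivation.commutator_apply, pderiv_X, Pi.single_apply, Derivation.zero_apply]
    split_ifs <;> simp
  have := congrArg (fun D => D p) h
  simpa [Derivation.commutator_apply, sub_eq_zero] using this

theorem pderiv_eq_zero_of_isHomogeneous_zero {p : MvPolynomial (Fin n) ℝ}
    (hp : p.IsHomogeneous 0) (i : Fin n) : pderiv i p = 0 := by
  rw [← totalDegree_zero_iff_isHomogeneous, totalDegree_eq_zero_iff_eq_C] at hp
  rw [hp, pderiv_C]

theorem lap_add (p r : MvPolynomial (Fin n) ℝ) : lap (p + r) = lap p + lap r := by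
  simp [lap, Finset.sum_add_distrib]

theorem lap_smul (c : ℝ) (p : MvPolynomial (Fin n) ℝ) : lap (c • p) = c • lap p := by
  simp [lap, Finset.smul_sum]

theorem lap_zero : lap (0 : MvPolynomial (Fin n) ℝ) = 0 := by
  simp [lap]

theorem pderiv_lap (i : Fin n) (p : MvPolynomial (Fin n) ℝ) :
    pderiv i (lap p) = lap (pderiv i p) := by
  simp only [lap, map_sum]
  refine Finset.sum_congr rfl fun r _ => ?_
  rw [pderiv_pderiv_comm i r, pderiv_pderiv_comm i r]

theorem lap_sum (f : Fin n → MvPolynomial (Fin n) ℝ) :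
    lap (∑ r, f r) = ∑ r, lap (f r) := by
  simp only [lap, map_sum]
  exact Finset.sum_comm

theorem MvPolynomial.IsHomogeneous.lap {p : MvPolynomial (Fin n) ℝ} {d : ℕ}
    (hp : p.IsHomogeneous d) : (lap p).IsHomogeneous (d - 2) :=
  IsHomogeneous.sum _ _ _ fun _ _ => hp.pderiv.pderiv

theorem lap_eq_zero_of_isHomogeneous {p : MvPolynomial (Fin n) ℝ} {d : ℕ}
    (hp : p.IsHomogeneous d) (hd : d < 2) : lap p = 0 := by
  refine Finset.sum_eq_zero fun r _ => pderiv_eq_zero_of_isHomogeneous_zero ?_ r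
  simpa [show d - 1 = 0 by omega] using hp.pderiv (i := r)

theorem isHomogeneous_sum_X_sq :
    (∑ r : Fin n, X r ^ 2 : MvPolynomial (Fin n) ℝ).IsHomogeneous 2 :=
  IsHomogeneous.sum _ _ _ fun r _ => isHomogeneous_X_pow r 2

theorem pderiv_sum_X_sq (i : Fin n) :
    pderiv i (∑ r : Fin n, X r ^ 2 : MvPolynomial (Fin n) ℝ) = 2 * X i := by
  simp [pderiv_X, Pi.single_apply, Derivation.leibniz_pow]

theorem lap_sum_X_sq_mul {p : MvPolynomial (Fin n) ℝ} {d : ℕ} (hp : p.IsHomogeneous d) :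
    lap ((∑ r : Fin n, X r ^ 2) * p) =
      (2 * n + 4 * d : ℝ) • p + (∑ r : Fin n, X r ^ 2) * lap p := by
  have euler := hp.sum_X_mul_pderiv
  have term (r : Fin n) : pderiv r (pderiv r ((∑ r : Fin n, X r ^ 2) * p)) =
      2 * p + 4 * (X r * pderiv r p) + (∑ r : Fin n, X r ^ 2) * pderiv r (pderiv r p) := by
    have h2 : pderiv r (2 : MvPolynomial (Fin n) ℝ) = 0 := Derivation.map_natCast _ 2
    simp only [pderiv_mul, pderiv_sum_X_sq, map_add, pderiv_X_self, h2]
    ring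
  simp only [lap, term, Finset.sum_add_distrib, ← Finset.mul_sum, euler]
  simp only [Finset.sum_const, Finset.card_univ, Fintype.card_fin, nsmul_eq_mul, smul_eq_C_mul,
    C_add, C_mul, map_natCast, map_ofNat]
  ring

/-- If `c > 0`, the operator `p ↦ c p + |x|² Δp` is injective on homogeneous polynomials. -/
theorem eq_zero_of_smul_add_sum_X_sq_mul_lap_eq_zero {d : ℕ} {p : MvPolynomial (Fin n) ℝ}
    (hp : p.IsHomogeneous d) {c : ℝ} (hc : 0 < c)
    (h : c • p + (∑ r : Fin n, X r ^ 2) * lap p = 0) : p = 0 := by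
  induction d using Nat.strong_induction_on generalizing p c with
  | _ d ih =>
    have hlap : lap p = 0 := by
      rcases lt_or_ge d 2 with hd | hd
      · exact lap_eq_zero_of_isHomogeneous hp hd
      · refine ih (d - 2) (by omega) hp.lap
          (c := c + (2 * n + 4 * (d - 2 : ℕ))) (by positivity) ?_
        have h' := congrArg lap h
        rw [lap_add, lap_smul, lap_sum_X_sq_mul hp.lap, lap_zero, ← add_assoc, ← add_smul] at h'
        exact h'
    rw [hlap, mul_zero, add_zero, smul_eq_zero] at h
    exact h.resolve_left (ne_of_gt hc)

/-- If `|x|² p` is biharmonic with `p` homogeneous, then `p` is harmonic. -/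
theorem lap_eq_zero_of_lap_lap_sum_X_sq_mul_eq_zero (hn : 0 < n) {d : ℕ}
    {p : MvPolynomial (Fin n) ℝ} (hp : p.IsHomogeneous d)
    (h : lap (lap ((∑ r : Fin n, X r ^ 2) * p)) = 0) : lap p = 0 := by
  rw [lap_sum_X_sq_mul hp, lap_add, lap_smul, lap_sum_X_sq_mul hp.lap, ← add_assoc,
    ← add_smul] at h
  exact eq_zero_of_smul_add_sum_X_sq_mul_lap_eq_zero hp.lap (by positivity) h

end Laplacian

section Navier

variable {n : ℕ}

theorem navier_add (b : ℝ) (u v : Fin n → MvPolynomial (Fin n) ℝ) :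
    navier b (u + v) = navier b u + navier b v := by
  funext j
  simp only [navier, Pi.add_apply, lap_add, map_add, Finset.sum_add_distrib, smul_add]
  abel

theorem navier_smul (b c : ℝ) (u : Fin n → MvPolynomial (Fin n) ℝ) :
    navier b (c • u) = c • navier b u := by
  funext j
  simp only [navier, Pi.smul_apply, lap_smul, Derivation.map_smul, ← Finset.smul_sum, smul_add,
    smul_comm b c]

theorem navier_sub (b : ℝ) (u v : Fin n → MvPolynomial (Fin n) ℝ) :
    navier b (u - v) = navier b u - navier b v := by
  rw [sub_eq_add_neg, ← neg_one_smul ℝ v, navier_add, navier_smul, neg_one_smul, ← sub_eq_add_neg]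

theorem navier_isHomogeneous (b : ℝ) {d : ℕ} {u : Fin n → MvPolynomial (Fin n) ℝ}
    (hu : ∀ j, (u j).IsHomogeneous d) (j : Fin n) : (navier b u j).IsHomogeneous (d - 2) := by
  refine (hu j).lap.add ?_
  rw [smul_eq_C_mul]
  have hdiv : (∑ r, pderiv r (u r)).IsHomogeneous (d - 1) :=
    IsHomogeneous.sum _ _ _ fun r _ => (hu r).pderiv
  exact hdiv.pderiv.C_mul b

theorem navier_eq_zero_of_isHomogeneous (b : ℝ) {d : ℕ} (hd : d < 2)
    {u : Fin n → MvPolynomial (Fin n) ℝ} (hu : ∀ j, (u j).IsHomogeneous d) :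
    navier b u = 0 := by
  funext j
  have hdiv : (∑ r, pderiv r (u r)).IsHomogeneous (d - 1) :=
    IsHomogeneous.sum _ _ _ fun r _ => (hu r).pderiv
  rw [show d - 1 = 0 by omega] at hdiv
  simp [navier, lap_eq_zero_of_isHomogeneous (hu j) hd, pderiv_eq_zero_of_isHomogeneous_zero hdiv]

/-- The divergence of a solution of the Navier equations is harmonic. -/
theorem lap_divergence_eq_zero {b : ℝ} (hb1 : 0 < b + 1) {u : Fin n → MvPolynomial (Fin n) ℝ}
    (hu : navier b u = 0) : lap (∑ r, pderiv r (u r)) = 0 := by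
  have h : (b + 1) • lap (∑ r, pderiv r (u r)) = 0 := by
    calc (b + 1) • lap (∑ r, pderiv r (u r))
        = ∑ j, pderiv j (navier b u j) := by
          simp only [navier, map_add, pderiv_lap, Derivation.map_smul, Finset.sum_add_distrib,
            ← Finset.smul_sum, ← lap_sum, add_smul, one_smul]
          rw [add_comm]
          rfl
      _ = 0 := by simp [hu]
  exact (smul_eq_zero.mp h).resolve_left (ne_of_gt hb1)

/-- A homogeneous solution of the Navier equations divisible by `|x|²` vanishes. -/
theorem eq_zero_of_navier_sum_X_sq_mul_eq_zero (hn : 2 ≤ n) {b : ℝ} (hb1 : 0 < b + 1) {d : ℕ}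
    {v : Fin n → MvPolynomial (Fin n) ℝ} (hv : ∀ j, (v j).IsHomogeneous d)
    (h : navier b (fun j => (∑ r : Fin n, X r ^ 2) * v j) = 0) : v = 0 := by
  set D := ∑ s, pderiv s ((∑ r : Fin n, X r ^ 2) * v s) with hD
  have hDlap : lap D = 0 := lap_divergence_eq_zero hb1 h
  have hw (j : Fin n) : lap ((∑ r : Fin n, X r ^ 2) * v j) = -(b • pderiv j D) :=
    eq_neg_of_add_eq_zero_left (congrFun h j)
  have hvlap (j : Fin n) : lap (v j) = 0 := by
    refine lap_eq_zero_of_lap_lap_sum_X_sq_mul_eq_zero (by omega) (hv j) ?_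
    rw [hw, ← neg_smul, lap_smul, ← pderiv_lap, hDlap, map_zero, smul_zero]
  have hgrad (j : Fin n) : (2 * n + 4 * d : ℝ) • v j = -(b • pderiv j D) := by
    rw [← hw, lap_sum_X_sq_mul (hv j), hvlap, mul_zero, add_zero]
  have hDhom : D.IsHomogeneous (d + 1) :=
    IsHomogeneous.sum _ _ _ fun s _ => by
      simpa [show 2 + d - 1 = d + 1 by omega] using
        (isHomogeneous_sum_X_sq.mul (hv s)).pderiv (i := s)
  have hDeq : (2 * n + 4 * d : ℝ) • D = -((2 * b * (d + 1)) • D) := by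
    calc (2 * n + 4 * d : ℝ) • D
        = ∑ s, (2 * X s * ((2 * n + 4 * d : ℝ) • v s) +
            (∑ r : Fin n, X r ^ 2) * pderiv s ((2 * n + 4 * d : ℝ) • v s)) := by
          rw [hD, Finset.smul_sum]
          refine Finset.sum_congr rfl fun s _ => ?_
          rw [pderiv_mul, pderiv_sum_X_sq, Derivation.map_smul, smul_add, mul_smul_comm,
            mul_smul_comm]
      _ = -(C (2 * b) * ∑ s, X s * pderiv s D) - C b * (∑ r : Fin n, X r ^ 2) * lap D := by
          rw [lap, Finset.mul_sum, Finset.mul_sum, ← Finset.sum_neg_distrib,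
            ← Finset.sum_sub_distrib]
          refine Finset.sum_congr rfl fun s _ => ?_
          simp only [hgrad, map_neg, Derivation.map_smul]
          simp only [smul_eq_C_mul, C_mul, map_ofNat]
          ring
      _ = -((2 * b * (d + 1)) • D) := by
          rw [hDlap, mul_zero, sub_zero, hDhom.sum_X_mul_pderiv]
          simp only [smul_eq_C_mul, C_mul, nsmul_eq_mul, map_add, map_natCast, map_one,
            Nat.cast_add, Nat.cast_one]
          ring
  have hn' : (2 : ℝ) ≤ n := by exact_mod_cast hn
  have hd' : (0 : ℝ) ≤ d := d.cast_nonneg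
  have hDzero : D = 0 := by
    rw [← add_eq_zero_iff_eq_neg, ← add_smul, smul_eq_zero] at hDeq
    exact hDeq.resolve_left (by nlinarith [mul_nonneg hb1.le hd'])
  funext j
  have := hgrad j
  rw [hDzero, map_zero, smul_zero, neg_zero, smul_eq_zero] at this
  exact this.resolve_left (by positivity)

/-- The operator `v ↦ N(|x|² v)` on tuples of homogeneous polynomials of degree `d`. -/
noncomputable def navierSumXSqMul (n : ℕ) (b : ℝ) (d : ℕ) :
    (Fin n → homogeneousSubmodule (Fin n) ℝ d) →ₗ[ℝ]
      (Fin n → homogeneousSubmodule (Fin n) ℝ d) where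
  toFun v j := ⟨navier b (fun i => (∑ r : Fin n, X r ^ 2) * (v i : MvPolynomial (Fin n) ℝ)) j, by
    have := navier_isHomogeneous b (fun i => isHomogeneous_sum_X_sq.mul (v i).2) j
    rwa [Nat.add_sub_cancel_left] at this⟩
  map_add' v w := by
    funext j
    refine Subtype.ext ?_
    simp only [Pi.add_apply, Submodule.coe_add, mul_add]
    exact congrFun (navier_add b _ _) j
  map_smul' c v := by
    funext j
    refine Subtype.ext ?_
    simp only [Pi.smul_apply, Submodule.coe_smul, mul_smul_comm, RingHom.id_apply]
    exact congrFun (navier_smul b c _) j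

theorem exists_navier_sum_X_sq_mul_eq (hn : 2 ≤ n) {b : ℝ} (hb1 : 0 < b + 1) {d : ℕ}
    {f : Fin n → MvPolynomial (Fin n) ℝ} (hf : ∀ j, (f j).IsHomogeneous d) :
    ∃ v : Fin n → MvPolynomial (Fin n) ℝ, (∀ j, (v j).IsHomogeneous d) ∧
      navier b (fun j => (∑ r : Fin n, X r ^ 2) * v j) = f := by
  have : Module.Finite ℝ (homogeneousSubmodule (Fin n) ℝ d) :=
    Module.Finite.iff_fg.mpr (homogeneousSubmodule_fg (Fin n) ℝ d)
  have hinj : Function.Injective (navierSumXSqMul n b d) := by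
    refine (injective_iff_map_eq_zero _).mpr fun v hv => ?_
    have hzero := eq_zero_of_navier_sum_X_sq_mul_eq_zero hn hb1 (fun j => (v j).2)
      (funext fun j => congrArg Subtype.val (congrFun hv j))
    exact funext fun j => Subtype.ext (congrFun hzero j)
  obtain ⟨v, hv⟩ := LinearMap.injective_iff_surjective.mp hinj fun j => ⟨f j, hf j⟩
  exact ⟨fun j => v j, fun j => (v j).2,
    funext fun j => congrArg Subtype.val (congrFun hv j)⟩

end Navier

/-- for every `k`, `𝓐̂ₖ = Ĥₖ ⊕ (x₁²+⋯+xₙ²)·𝓐̂_{k-2}`, i.e. every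
`n`-tuple of homogeneous degree-`k` polynomials decomposes uniquely as the sum of a
homogeneous degree-`k` polynomial solution of the Navier equations and an element of
`(x₁²+⋯+xₙ²)·𝓐̂_{k-2}`. -/
theorem navier_decomposition_Ak (n : ℕ) (hn : 3 ≤ n) (b : ℝ) (hb : b ≠ 0)
    (hb1 : 0 < b + 1) (k : ℕ) (u : Fin n → MvPolynomial (Fin n) ℝ)
    (hu : ∀ j, (u j).IsHomogeneous k) :
    ∃! p : (Fin n → MvPolynomial (Fin n) ℝ) × (Fin n → MvPolynomial (Fin n) ℝ),
      ((∀ j, (p.1 j).IsHomogeneous k) ∧ navier b p.1 = 0) ∧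
        inQA k p.2 ∧ u = p.1 + p.2 := by
  rcases lt_or_ge k 2 with hk | hk
  · simp only [inQA, if_neg (not_le.mpr hk)]
    refine ⟨(u, 0), ⟨⟨hu, navier_eq_zero_of_isHomogeneous b hk hu⟩, rfl, (add_zero u).symm⟩, ?_⟩
    rintro ⟨p, w⟩ ⟨-, rfl, rfl⟩
    simp
  · simp only [inQA, if_pos hk]
    obtain ⟨v, hv, hNv⟩ :=
      exists_navier_sum_X_sq_mul_eq (by omega) hb1 (navier_isHomogeneous b hu)
    have hqv (v' : Fin n → MvPolynomial (Fin n) ℝ) (hv' : ∀ j, (v' j).IsHomogeneous (k - 2))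
        (j : Fin n) : ((∑ r : Fin n, X r ^ 2) * v' j).IsHomogeneous k := by
      simpa [show 2 + (k - 2) = k by omega] using isHomogeneous_sum_X_sq.mul (hv' j)
    refine ⟨(u - fun j => (∑ r : Fin n, X r ^ 2) * v j, fun j => (∑ r : Fin n, X r ^ 2) * v j),
      ⟨⟨fun j => (hu j).sub (hqv v hv j), by rw [navier_sub, hNv, sub_self]⟩,
        ⟨v, hv, rfl⟩, (sub_add_cancel _ _).symm⟩, ?_⟩
    rintro ⟨p, w⟩ ⟨⟨-, hNp⟩, ⟨v', hv', rfl⟩, hup⟩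
    have hdiff : v' - v = 0 := by
      refine eq_zero_of_navier_sum_X_sq_mul_eq_zero (by omega) hb1
        (fun j => (hv' j).sub (hv j)) ?_
      simp only [Pi.sub_apply, mul_sub]
      refine (navier_sub b _ _).trans ?_
      rw [hNv, hup, navier_add, hNp, zero_add, sub_self]
    obtain rfl := sub_eq_zero.mp hdiff
    rw [hup, add_sub_cancel_right]
end

section
/- Assume n ≥ 3 and n ≠ 4. For every integer k ≥ 1, the subspace Ĥ_{k,2} of ℝ[x₁,…,xₙ]ⁿ is irreducible under the o(n,ℝ)-action: it is invariant under all the operators L_{r,s} (1 ≤ r < s ≤ n), and its only L_{r,s}-invariant ℝ-subspaces are {0} and Ĥ_{k,2} itself. -/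
open MvPolynomial

/-- The set `Ĥ_{k,2}` of tuples of degree-`k` harmonics `(f₁,…,fₙ)` with
`∑ᵣ xᵣ fᵣ = 0`. -/
def Hk2Set (n k : ℕ) : Set (Fin n → MvPolynomial (Fin n) ℝ) :=
  {w | (∀ r, (w r).IsHomogeneous k ∧ lap (w r) = 0) ∧ (∑ r : Fin n, X r * w r) = 0}

/-- The `o(n,ℝ)`-action on tuples:
`L_{r,s}(u) = (x_r∂_{x_s} − x_s∂_{x_r})(u) + u_s ς_r − u_r ς_s`. -/
noncomputable def Lop {n : ℕ} (r s : Fin n) (u : Fin n → MvPolynomial (Fin n) ℝ) :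
    Fin n → MvPolynomial (Fin n) ℝ :=
  fun j => (X r * pderiv s (u j) - X s * pderiv r (u j))
    + (if j = r then u s else 0) - (if j = s then u r else 0)


namespace OrthogonalTuples

section Generic

variable {R : Type*} [CommRing R] {n : ℕ}

theorem pderiv_comm {σ : Type*} (i j : σ) (p : MvPolynomial σ R) :
    pderiv i (pderiv j p) = pderiv j (pderiv i p) := by
  classical
  ext m
  simp only [coeff_pderiv, Finsupp.add_apply, Finsupp.single_apply, add_right_comm m]
  by_cases h : i = j
  · subst h; ring
  · simp [h, Ne.symm h]; ring

/-- The operator `L_{r,s}` on tuples of polynomials over an arbitrary ring, as a linear map. -/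
noncomputable def rot (r s : Fin n) : Module.End R (Fin n → MvPolynomial (Fin n) R) where
  toFun u j := (X r * pderiv s (u j) - X s * pderiv r (u j))
    + (if j = r then u s else 0) - (if j = s then u r else 0)
  map_add' u v := by
    funext j
    simp only [Pi.add_apply, map_add]
    split_ifs <;> ring
  map_smul' c u := by
    funext j
    simp only [Pi.smul_apply, RingHom.id_apply, smul_eq_C_mul, pderiv_C_mul]
    split_ifs <;> ring

theorem rot_apply (r s : Fin n) (u : Fin n → MvPolynomial (Fin n) R) (j : Fin n) :
    rot r s u j = (X r * pderiv s (u j) - X s * pderiv r (u j))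
      + (if j = r then u s else 0) - (if j = s then u r else 0) := rfl

theorem rot_swap (r s : Fin n) (u : Fin n → MvPolynomial (Fin n) R) :
    rot s r u = -rot r s u := by
  funext j
  simp only [rot_apply, Pi.neg_apply]
  ring

theorem rot_self (r : Fin n) (u : Fin n → MvPolynomial (Fin n) R) : rot r r u = 0 := by
  funext j
  simp [rot_apply]

theorem rot_mem_of_lt {W : Submodule R (Fin n → MvPolynomial (Fin n) R)}
    (hW : ∀ r s : Fin n, r < s → ∀ u ∈ W, rot r s u ∈ W) (r s : Fin n) :
    ∀ u ∈ W, rot r s u ∈ W := by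
  intro u hu
  rcases lt_trichotomy r s with h | rfl | h
  · exact hW r s h u hu
  · rw [rot_self]; exact W.zero_mem
  · rw [rot_swap]; exact W.neg_mem (hW s r h u hu)

/-- The Laplacian on polynomials over an arbitrary ring, as a linear map. -/
noncomputable def laplacian : Module.End R (MvPolynomial (Fin n) R) :=
  ∑ r : Fin n, (pderiv r).toLinearMap ∘ₗ (pderiv r).toLinearMap

theorem laplacian_apply (p : MvPolynomial (Fin n) R) :
    laplacian p = ∑ r : Fin n, pderiv r (pderiv r p) := by
  simp [laplacian]

theorem laplacian_X_mul (r : Fin n) (p : MvPolynomial (Fin n) R) :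
    laplacian (X r * p) = X r * laplacian p + 2 * pderiv r p := by
  simp only [laplacian_apply, pderiv_mul, pderiv_X, map_add, Finset.sum_add_distrib,
    Finset.mul_sum, Pi.single_apply, ite_mul, one_mul, zero_mul]
  have h : ∀ i : Fin n, pderiv i (if r = i then p else 0) = if r = i then pderiv i p else 0 := by
    intro i; split_ifs <;> simp
  simp [h]
  ring

theorem laplacian_pderiv (r : Fin n) (p : MvPolynomial (Fin n) R) :
    laplacian (pderiv r p) = pderiv r (laplacian p) := by
  simp only [laplacian_apply, map_sum]
  exact Finset.sum_congr rfl fun i _ => by rw [pderiv_comm i r p, pderiv_comm i r]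

variable (R n) in
/-- Tuples `u` of harmonic polynomials, homogeneous of degree `k`, with `∑ᵣ xᵣ uᵣ = 0`. -/
noncomputable def harmonicTuples (k : ℕ) : Submodule R (Fin n → MvPolynomial (Fin n) R) where
  carrier := {u | (∀ r, (u r).IsHomogeneous k ∧ laplacian (u r) = 0) ∧ ∑ r, X r * u r = 0}
  add_mem' := by
    rintro u v ⟨hu, hu'⟩ ⟨hv, hv'⟩
    refine ⟨fun r => ⟨(hu r).1.add (hv r).1, ?_⟩, ?_⟩
    · simp [(hu r).2, (hv r).2]
    · simp [mul_add, Finset.sum_add_distrib, hu', hv']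
  zero_mem' := ⟨fun r => ⟨isHomogeneous_zero _ _ _, by simp⟩, by simp⟩
  smul_mem' := by
    rintro c u ⟨hu, hu'⟩
    refine ⟨fun r => ⟨(homogeneousSubmodule (Fin n) R k).smul_mem c (hu r).1, ?_⟩, ?_⟩
    · simp [(hu r).2]
    · simp [← Finset.smul_sum, hu']

theorem mem_harmonicTuples {k : ℕ} {u : Fin n → MvPolynomial (Fin n) R} :
    u ∈ harmonicTuples R n k ↔
      (∀ r, (u r).IsHomogeneous k ∧ laplacian (u r) = 0) ∧ ∑ r, X r * u r = 0 := Iff.rfl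

theorem finite_harmonicTuples {K : Type*} [Field K] (k : ℕ) :
    Module.Finite K (harmonicTuples K n k) := by
  have : Module.Finite K (homogeneousSubmodule (Fin n) K k) :=
    Module.Finite.iff_fg.2 (homogeneousSubmodule_fg (Fin n) K k)
  let f : harmonicTuples K n k →ₗ[K] (Fin n → homogeneousSubmodule (Fin n) K k) :=
    LinearMap.pi fun j => ((LinearMap.proj j).comp (harmonicTuples K n k).subtype).codRestrict _
      fun u => (u.2.1 j).1
  refine Module.Finite.of_injective f fun u v h => Subtype.ext (funext fun j => ?_)
  exact congrArg Subtype.val (congrFun h j)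

theorem isHomogeneous_X_mul_pderiv {k : ℕ} {p : MvPolynomial (Fin n) R} (hp : p.IsHomogeneous k)
    (r s : Fin n) : (X r * pderiv s p).IsHomogeneous k := by
  rcases Nat.eq_zero_or_pos k with rfl | hk
  · rw [totalDegree_eq_zero_iff_eq_C.1 (Nat.le_zero.1 hp.totalDegree_le), pderiv_C, mul_zero]
    exact isHomogeneous_zero _ _ _
  · have := (isHomogeneous_X R r).mul (hp.pderiv (i := s))
    rwa [Nat.add_sub_cancel' hk] at this

theorem rot_mem_harmonicTuples {k : ℕ} (r s : Fin n) {u : Fin n → MvPolynomial (Fin n) R}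
    (hu : u ∈ harmonicTuples R n k) : rot r s u ∈ harmonicTuples R n k := by
  obtain ⟨h, h0⟩ := hu
  refine ⟨fun j => ⟨?_, ?_⟩, ?_⟩
  · have hite : ∀ (P : Prop) [Decidable P] (t : Fin n),
        (if P then u t else 0).IsHomogeneous k := by
      intro P _ t
      split_ifs
      · exact (h t).1
      · exact isHomogeneous_zero _ _ _
    exact (((isHomogeneous_X_mul_pderiv (h j).1 r s).sub
      (isHomogeneous_X_mul_pderiv (h j).1 s r)).add (hite _ _)).sub (hite _ _)
  · have hite : ∀ (P : Prop) [Decidable P] (t : Fin n), laplacian (if P then u t else 0) = 0 := by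
      intro P _ t
      split_ifs
      · exact (h t).2
      · simp
    rw [rot_apply, map_sub, map_add, map_sub, hite, hite, laplacian_X_mul, laplacian_X_mul,
      laplacian_pderiv, laplacian_pderiv, (h j).2, pderiv_comm r s]
    simp
  · have key : ∀ t : Fin n, ∑ j, X j * pderiv t (u j) = -u t := by
      intro t
      have := congrArg (pderiv t) h0
      simp only [map_sum, pderiv_mul, pderiv_X, Finset.sum_add_distrib, map_zero,
        Pi.single_apply, ite_mul, one_mul, zero_mul, Finset.sum_ite_eq', Finset.mem_univ,
        if_true] at this
      exact eq_neg_of_add_eq_zero_right (by simpa [Finset.sum_ite_eq] using this)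
    have e : ∀ j, X j * rot r s u j = X r * (X j * pderiv s (u j)) - X s * (X j * pderiv r (u j))
        + (if j = r then X j * u s else 0) - (if j = s then X j * u r else 0) := by
      intro j
      rw [rot_apply]
      split_ifs <;> ring
    simp only [e, Finset.sum_add_distrib, Finset.sum_sub_distrib, ← Finset.mul_sum, key]
    simp

theorem rot_rot_sub {r s t : Fin n} (hrs : r ≠ s) (hrt : r ≠ t) (hst : s ≠ t)
    (u : Fin n → MvPolynomial (Fin n) R) :
    rot r s (rot r t u) - rot r t (rot r s u) = -rot s t u := by
  funext j
  simp only [Pi.sub_apply, Pi.neg_apply, rot_apply]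
  have hite : ∀ (i : Fin n) (P : Prop) [Decidable P] (p : MvPolynomial (Fin n) R),
      pderiv i (if P then p else 0) = if P then pderiv i p else 0 := by
    intro i P _ p
    split_ifs <;> simp
  simp only [map_add, map_sub, pderiv_mul, pderiv_X_self, pderiv_X_of_ne hrs, pderiv_X_of_ne hrt,
    pderiv_X_of_ne hst, pderiv_X_of_ne hrs.symm, pderiv_X_of_ne hrt.symm,
    pderiv_X_of_ne hst.symm, hite, if_true, if_neg hrs, if_neg hrt, if_neg hst, if_neg hrs.symm,
    if_neg hrt.symm, if_neg hst.symm, pderiv_comm s r, pderiv_comm t r, pderiv_comm t s]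
  by_cases h1 : j = r
  · subst h1
    simp only [if_true, if_neg hrs, if_neg hrt]
    ring
  by_cases h2 : j = s
  · subst h2
    simp only [if_true, if_neg hrs.symm, if_neg hst]
    ring
  by_cases h3 : j = t
  · subst h3
    simp only [if_true, if_neg hrt.symm, if_neg hst.symm]
    ring
  simp only [if_neg h1, if_neg h2, if_neg h3]
  ring

end Generic

section Complex

open Complex (I)

variable {m : ℕ}

theorem coeff_X_mul_pderiv {σ R : Type*} [CommRing R] (j : σ) (p : MvPolynomial σ R)
    (α : σ →₀ ℕ) : coeff α (X j * pderiv j p) = α j * coeff α p := by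
  classical
  rw [coeff_X_mul']
  split_ifs with h
  · have h' : α j ≠ 0 := Finsupp.mem_support_iff.1 h
    have e : α - Finsupp.single j 1 + Finsupp.single j 1 = α := Finsupp.sub_add_single_one_cancel h'
    rw [coeff_pderiv, e, mul_comm]
    congr 1
    have := congrArg (fun β : σ →₀ ℕ => ((β j : ℕ) : R)) e
    simpa using this
  · simp [Finsupp.notMem_support_iff.1 h]

/-- The index of the coordinate `x_{a+3}`, in the numbering of coordinates by `1, …, n`. -/
abbrev tl (a : Fin m) : Fin (m + 2) := a.succ.succ

theorem tl_ne_zero (a : Fin m) : tl a ≠ 0 := Fin.succ_ne_zero _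

theorem tl_ne_one (a : Fin m) : tl a ≠ 1 := fun h => Fin.succ_ne_zero a (Fin.succ_injective _ h)

theorem tl_inj {a b : Fin m} : tl a = tl b ↔ a = b := by simp [tl]

theorem zero_ne_one' : (0 : Fin (m + 2)) ≠ 1 := by simp

theorem C_I_mul_C_I : (C I * C I : MvPolynomial (Fin (m + 2)) ℂ) = -1 := by
  rw [← C_mul, Complex.I_mul_I]; simp

theorem sum_eq_zero_add_one_add {M : Type*} [AddCommMonoid M] (f : Fin (m + 2) → M) :
    ∑ r, f r = f 0 + f 1 + ∑ a : Fin m, f (tl a) := by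
  rw [Fin.sum_univ_succ, Fin.sum_univ_succ, ← add_assoc]; rfl

/-- The isotropic coordinate `z = x₁ + i x₂`. -/
noncomputable def nullVar : MvPolynomial (Fin (m + 2)) ℂ := X 0 + C I * X 1

/-- The derivation `∂₁ + i ∂₂`, which annihilates `z = x₁ + i x₂`. -/
noncomputable def nullDeriv :
    Derivation ℂ (MvPolynomial (Fin (m + 2)) ℂ) (MvPolynomial (Fin (m + 2)) ℂ) :=
  pderiv 0 + I • pderiv 1

/-- The derivation `∂₁ - i ∂₂`. -/
noncomputable def conjDeriv :
    Derivation ℂ (MvPolynomial (Fin (m + 2)) ℂ) (MvPolynomial (Fin (m + 2)) ℂ) :=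
  pderiv 0 - I • pderiv 1

/-- The Euler operator in the variables other than the first two. -/
noncomputable def tailEuler (p : MvPolynomial (Fin (m + 2)) ℂ) : MvPolynomial (Fin (m + 2)) ℂ :=
  ∑ a : Fin m, X (tl a) * pderiv (tl a) p

theorem nullVar_ne_zero : (nullVar : MvPolynomial (Fin (m + 2)) ℂ) ≠ 0 := by
  intro h
  have := congrArg (pderiv 0) h
  simp [nullVar] at this

theorem nullDeriv_apply (p : MvPolynomial (Fin (m + 2)) ℂ) :
    nullDeriv p = pderiv 0 p + C I * pderiv 1 p := by
  simp [nullDeriv, smul_eq_C_mul]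

theorem conjDeriv_apply (p : MvPolynomial (Fin (m + 2)) ℂ) :
    conjDeriv p = pderiv 0 p - C I * pderiv 1 p := by
  simp [conjDeriv, smul_eq_C_mul]

theorem pderiv_tl_nullVar (a : Fin m) : pderiv (tl a) (nullVar : MvPolynomial _ ℂ) = 0 := by
  simp [nullVar, pderiv_X_of_ne (tl_ne_zero a).symm,
    pderiv_X_of_ne (tl_ne_one a).symm]

theorem pderiv_zero_nullVar : pderiv 0 (nullVar : MvPolynomial (Fin (m + 2)) ℂ) = 1 := by
  simp [nullVar]

theorem pderiv_one_nullVar : pderiv 1 (nullVar : MvPolynomial (Fin (m + 2)) ℂ) = C I := by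
  simp [nullVar]

theorem conjDeriv_nullVar : conjDeriv (nullVar : MvPolynomial (Fin (m + 2)) ℂ) = 2 := by
  rw [conjDeriv_apply, pderiv_zero_nullVar, pderiv_one_nullVar, C_I_mul_C_I]; norm_num

theorem nullVar_mul_conjDeriv_pow (k : ℕ) :
    nullVar * conjDeriv (nullVar ^ k)
      = (2 * (k : MvPolynomial (Fin (m + 2)) ℂ) * nullVar ^ k) := by
  rw [Derivation.leibniz_pow, conjDeriv_nullVar]
  cases k with
  | zero => simp
  | succ k =>
    simp only [Nat.add_sub_cancel, smul_eq_mul, nsmul_eq_mul]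
    push_cast
    ring

theorem nullDeriv_X_tl (a : Fin m) : nullDeriv (X (tl a) : MvPolynomial _ ℂ) = 0 := by
  simp [nullDeriv_apply, pderiv_X_of_ne (tl_ne_zero a), pderiv_X_of_ne (tl_ne_one a)]

theorem conjDeriv_X_tl (a : Fin m) : conjDeriv (X (tl a) : MvPolynomial _ ℂ) = 0 := by
  simp [conjDeriv_apply, pderiv_X_of_ne (tl_ne_zero a), pderiv_X_of_ne (tl_ne_one a)]

theorem pderiv_nullDeriv (j : Fin (m + 2)) (p : MvPolynomial (Fin (m + 2)) ℂ) :
    pderiv j (nullDeriv p) = nullDeriv (pderiv j p) := by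
  simp [nullDeriv_apply, pderiv_comm j]

theorem pderiv_conjDeriv (j : Fin (m + 2)) (p : MvPolynomial (Fin (m + 2)) ℂ) :
    pderiv j (conjDeriv p) = conjDeriv (pderiv j p) := by
  simp [conjDeriv_apply, pderiv_comm j]

theorem laplacian_eq (p : MvPolynomial (Fin (m + 2)) ℂ) :
    laplacian p = conjDeriv (nullDeriv p) + ∑ a : Fin m, pderiv (tl a) (pderiv (tl a) p) := by
  rw [laplacian_apply, sum_eq_zero_add_one_add, conjDeriv_apply, nullDeriv_apply]
  simp only [map_add, pderiv_C_mul]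
  linear_combination (pderiv 1 (pderiv 1 p)) * (C_I_mul_C_I (m := m))
    + C I * pderiv_comm (1 : Fin (m + 2)) 0 p

theorem isHomogeneous_nullDeriv {k : ℕ} {p : MvPolynomial (Fin (m + 2)) ℂ}
    (hp : p.IsHomogeneous k) : (nullDeriv p).IsHomogeneous (k - 1) := by
  rw [nullDeriv_apply]
  exact hp.pderiv.add (hp.pderiv.C_mul _)

theorem isHomogeneous_conjDeriv {k : ℕ} {p : MvPolynomial (Fin (m + 2)) ℂ}
    (hp : p.IsHomogeneous k) : (conjDeriv p).IsHomogeneous (k - 1) := by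
  rw [conjDeriv_apply]
  exact hp.pderiv.sub (hp.pderiv.C_mul _)

theorem eq_zero_of_tailEuler_add_eq_zero {c : ℕ} (hc : 0 < c)
    {p : MvPolynomial (Fin (m + 2)) ℂ} (h : tailEuler p + c * p = 0) : p = 0 := by
  ext α
  have := congrArg (coeff α) h
  rw [tailEuler, coeff_add, coeff_sum, ← map_natCast (C : ℂ →+* _), coeff_C_mul] at this
  simp only [coeff_X_mul_pderiv, ← Finset.sum_mul, ← add_mul, coeff_zero] at this
  rw [coeff_zero]
  refine (mul_eq_zero.1 this).resolve_left ?_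
  norm_cast
  omega

/-- The operator `z(∂₁ - i∂₂) + ∑ xₐ∂ₐ + c` is injective on homogeneous polynomials
for `c > 0`. -/
theorem eq_zero_of_nullVar_mul_conjDeriv_add {d : ℕ} : ∀ {c : ℕ} {p : MvPolynomial (Fin (m + 2)) ℂ},
    0 < c → p.IsHomogeneous d → nullVar * conjDeriv p + tailEuler p + (c : MvPolynomial (Fin (m + 2)) ℂ) * p = 0 → p = 0 := by
  induction d with
  | zero =>
    intro c p hc hp h
    refine eq_zero_of_tailEuler_add_eq_zero hc ?_
    rw [totalDegree_eq_zero_iff_eq_C.1 (Nat.le_zero.1 hp.totalDegree_le)] at h ⊢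
    simpa [conjDeriv_apply] using h
  | succ d ih =>
    intro c p hc hp h
    have hD : conjDeriv p = 0 := by
      refine ih (c := c + 2) (by omega) (isHomogeneous_conjDeriv hp) ?_
      have := congrArg conjDeriv h
      simp only [tailEuler, map_add, map_sum, Derivation.leibniz, smul_eq_mul, conjDeriv_nullVar,
        conjDeriv_X_tl, map_zero, Derivation.map_natCast, mul_zero, add_zero] at this
      simp only [tailEuler, pderiv_conjDeriv]
      push_cast
      linear_combination this
    rw [hD, mul_zero, zero_add] at h
    exact eq_zero_of_tailEuler_add_eq_zero hc h

/-- The consequence of harmonicity for a polynomial on which the raising operators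
`z∂ₐ - xₐ(∂₁ + i∂₂)` take the values `qₐ`. -/
theorem raising_harmonic {p : MvPolynomial (Fin (m + 2)) ℂ}
    {q : Fin m → MvPolynomial (Fin (m + 2)) ℂ} (hp : laplacian p = 0)
    (h : ∀ a, nullVar * pderiv (tl a) p = X (tl a) * nullDeriv p + q a) :
    nullVar * conjDeriv (nullDeriv p) + tailEuler (nullDeriv p) + (m : MvPolynomial (Fin (m + 2)) ℂ) * nullDeriv p
      + ∑ a, pderiv (tl a) (q a) = 0 := by
  have h' : ∀ a, nullVar * pderiv (tl a) (pderiv (tl a) p)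
      = nullDeriv p + X (tl a) * pderiv (tl a) (nullDeriv p) + pderiv (tl a) (q a) := by
    intro a
    have := congrArg (pderiv (tl a)) (h a)
    simp only [map_add, pderiv_mul, pderiv_tl_nullVar, pderiv_X_self] at this
    linear_combination this
  have hs := Finset.sum_congr rfl fun a (_ : a ∈ Finset.univ) => h' a
  rw [← Finset.mul_sum, Finset.sum_add_distrib, Finset.sum_add_distrib, Finset.sum_const,
    Finset.card_univ, Fintype.card_fin, nsmul_eq_mul] at hs
  rw [laplacian_eq] at hp
  rw [tailEuler]
  linear_combination nullVar * hp - hs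

theorem nullDeriv_eq_zero_of_raising {k : ℕ} (hm : 0 < m) {p : MvPolynomial (Fin (m + 2)) ℂ}
    {q : Fin m → MvPolynomial (Fin (m + 2)) ℂ} (hk : p.IsHomogeneous k) (hp : laplacian p = 0)
    (h : ∀ a, nullVar * pderiv (tl a) p = X (tl a) * nullDeriv p + q a)
    (hq : ∀ a, pderiv (tl a) (q a) = 0) : nullDeriv p = 0 := by
  refine eq_zero_of_nullVar_mul_conjDeriv_add hm (isHomogeneous_nullDeriv hk) ?_
  simpa [hq] using raising_harmonic hp h

theorem eq_C_mul_nullVar_pow {d : ℕ} : ∀ {p : MvPolynomial (Fin (m + 2)) ℂ},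
    p.IsHomogeneous d → nullDeriv p = 0 → (∀ a : Fin m, pderiv (tl a) p = 0) →
    ∃ c : ℂ, p = C c * nullVar ^ d := by
  induction d with
  | zero =>
    intro p hp _ _
    exact ⟨_, by simpa using totalDegree_eq_zero_iff_eq_C.1 (Nat.le_zero.1 hp.totalDegree_le)⟩
  | succ d ih =>
    intro p hp h0 ha
    obtain ⟨c, hc⟩ := ih (p := pderiv 0 p) hp.pderiv
      (by rw [← pderiv_nullDeriv, h0, map_zero])
      (fun a => by rw [pderiv_comm, ha, map_zero])
    have he := hp.sum_X_mul_pderiv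
    rw [sum_eq_zero_add_one_add] at he
    simp only [ha, mul_zero, Finset.sum_const_zero, add_zero, nsmul_eq_mul] at he
    rw [nullDeriv_apply] at h0
    have h1 : pderiv 1 p = C I * pderiv 0 p := by
      linear_combination (-C I) * h0 + pderiv 1 p * (C_I_mul_C_I (m := m))
    have hd : ((d + 1 : ℕ) : MvPolynomial (Fin (m + 2)) ℂ) ≠ 0 := Nat.cast_ne_zero.2 (by omega)
    refine ⟨c / (d + 1 : ℕ), mul_left_cancel₀ hd ?_⟩
    have hC : ((d + 1 : ℕ) : MvPolynomial (Fin (m + 2)) ℂ) * C (c / (d + 1 : ℕ)) = C c := by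
      rw [← map_natCast (C : ℂ →+* _), ← C_mul, mul_div_cancel₀ _ (Nat.cast_ne_zero.2 (by omega))]
    rw [← he, h1, hc, ← mul_assoc ((d + 1 : ℕ) : MvPolynomial _ ℂ), hC, pow_succ]
    linear_combination (-(C c * nullVar ^ d)) * nullVar.eq_def (m := m)

/-- The highest weight tuples `z^k (z ςₐ - xₐ (ς₁ + i ς₂))`. -/
noncomputable def topTuple (k : ℕ) (a : Fin m) : Fin (m + 2) → MvPolynomial (Fin (m + 2)) ℂ :=
  Fin.cons (-(X (tl a) * nullVar ^ k)) (Fin.cons (-(C I * (X (tl a) * nullVar ^ k)))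
    (Pi.single a (nullVar ^ (k + 1))))

theorem topTuple_zero (k : ℕ) (a : Fin m) : topTuple k a 0 = -(X (tl a) * nullVar ^ k) := rfl

theorem topTuple_one (k : ℕ) (a : Fin m) :
    topTuple k a 1 = -(C I * (X (tl a) * nullVar ^ k)) := rfl

theorem topTuple_tl (k : ℕ) (a b : Fin m) :
    topTuple k a (tl b) = if b = a then nullVar ^ (k + 1) else 0 := by
  simp [topTuple, tl, Pi.single_apply]

theorem topTuple_ne_zero (k : ℕ) (a : Fin m) : topTuple k a ≠ 0 := by
  intro h
  have := congrFun h (tl a)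
  rw [topTuple_tl, if_pos rfl] at this
  exact pow_ne_zero _ nullVar_ne_zero this

theorem funext_tl {M : Type*} {u v : Fin (m + 2) → M} (h0 : u 0 = v 0) (h1 : u 1 = v 1)
    (h : ∀ a : Fin m, u (tl a) = v (tl a)) : u = v :=
  funext fun j => Fin.cases h0 (fun i => Fin.cases h1 h i) j

/-- The raising operator `L_{1,a} + i L_{2,a}`. -/
noncomputable def raising (a : Fin m) :
    Module.End ℂ (Fin (m + 2) → MvPolynomial (Fin (m + 2)) ℂ) :=
  rot 0 (tl a) + I • rot 1 (tl a)

theorem raising_zero (a : Fin m) (u : Fin (m + 2) → MvPolynomial (Fin (m + 2)) ℂ) :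
    raising a u 0 = nullVar * pderiv (tl a) (u 0) - X (tl a) * nullDeriv (u 0) + u (tl a) := by
  simp [raising, rot_apply, (tl_ne_zero a).symm, smul_eq_C_mul, nullVar, nullDeriv_apply]
  ring

theorem raising_one (a : Fin m) (u : Fin (m + 2) → MvPolynomial (Fin (m + 2)) ℂ) :
    raising a u 1 = nullVar * pderiv (tl a) (u 1) - X (tl a) * nullDeriv (u 1)
      + C I * u (tl a) := by
  simp [raising, rot_apply, (tl_ne_one a).symm, smul_eq_C_mul, nullVar, nullDeriv_apply]
  ring

theorem raising_tl (a b : Fin m) (u : Fin (m + 2) → MvPolynomial (Fin (m + 2)) ℂ) :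
    raising a u (tl b) = nullVar * pderiv (tl a) (u (tl b)) - X (tl a) * nullDeriv (u (tl b))
      - if b = a then u 0 + C I * u 1 else 0 := by
  simp [raising, rot_apply, tl_ne_one, smul_eq_C_mul, nullVar, nullDeriv_apply, -Fin.succ_inj,
    tl_inj]
  split_ifs <;> ring

theorem exists_eq_sum_topTuple (hm : 0 < m) {k : ℕ}
    {u : Fin (m + 2) → MvPolynomial (Fin (m + 2)) ℂ} (hu : u ∈ harmonicTuples ℂ (m + 2) (k + 1))
    (h : ∀ a, raising a u = 0) : ∃ c : Fin m → ℂ, u = ∑ a, c a • topTuple k a := by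
  obtain ⟨hh, hx⟩ := hu
  set g := u 0 + C I * u 1 with hg
  have r0 : ∀ a, nullVar * pderiv (tl a) (u 0) = X (tl a) * nullDeriv (u 0) + -u (tl a) := by
    intro a
    have := congrFun (h a) 0
    rw [raising_zero, Pi.zero_apply] at this
    linear_combination this
  have r1 : ∀ a, nullVar * pderiv (tl a) (u 1) = X (tl a) * nullDeriv (u 1) + -(C I * u (tl a)) := by
    intro a
    have := congrFun (h a) 1
    rw [raising_one, Pi.zero_apply] at this
    linear_combination this
  have rt : ∀ b a, nullVar * pderiv (tl a) (u (tl b)) = X (tl a) * nullDeriv (u (tl b))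
      + if b = a then g else 0 := by
    intro b a
    have := congrFun (h a) (tl b)
    rw [raising_tl, Pi.zero_apply] at this
    linear_combination this
  have rg : ∀ a, nullVar * pderiv (tl a) g = X (tl a) * nullDeriv g + 0 := by
    intro a
    rw [hg, map_add, map_add, pderiv_C_mul, ← smul_eq_C_mul (u 1), Derivation.map_smul,
      smul_eq_C_mul]
    linear_combination r0 a + C I * r1 a - u (tl a) * (C_I_mul_C_I (m := m))
  have hgh : g.IsHomogeneous (k + 1) := (hh 0).1.add ((hh 1).1.C_mul _)
  have hgl : laplacian g = 0 := by
    rw [hg, ← smul_eq_C_mul, map_add, map_smul, (hh 0).2, (hh 1).2]; simp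
  have hgD : nullDeriv g = 0 := nullDeriv_eq_zero_of_raising hm hgh hgl rg (by simp)
  have hgt : ∀ a, pderiv (tl a) g = 0 := by
    intro a
    have := rg a
    rw [hgD, mul_zero, add_zero] at this
    exact (mul_eq_zero.1 this).resolve_left nullVar_ne_zero
  obtain ⟨c, hc⟩ := eq_C_mul_nullVar_pow hgh hgD hgt
  have htD : ∀ b, nullDeriv (u (tl b)) = 0 := by
    intro b
    refine nullDeriv_eq_zero_of_raising hm (hh _).1 (hh _).2 (rt b) fun a => ?_
    split_ifs
    · exact hgt a
    · simp
  have htt : ∀ b a, pderiv (tl a) (u (tl b)) = if b = a then C c * nullVar ^ k else 0 := by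
    intro b a
    have := rt b a
    rw [htD, mul_zero, zero_add, hc] at this
    refine mul_left_cancel₀ nullVar_ne_zero (this.trans ?_)
    split_ifs <;> ring
  have hu1 : u 1 = C I * (u 0 - C c * nullVar ^ (k + 1)) := by
    linear_combination (-C I) * hc + (C I) * hg + u 1 * (C_I_mul_C_I (m := m))
  have hD1 : nullDeriv (u 1) = C I * nullDeriv (u 0) := by
    rw [hu1, ← hc, ← smul_eq_C_mul, Derivation.map_smul, map_sub, hgD, sub_zero, smul_eq_C_mul]
  have hxD : nullDeriv (u 0) = -(C c * nullVar ^ k) := by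
    have := congrArg nullDeriv hx
    rw [sum_eq_zero_add_one_add] at this
    simp only [map_add, map_sum, Derivation.leibniz, smul_eq_mul, htD, nullDeriv_X_tl, mul_zero,
      add_zero, Finset.sum_const_zero, map_zero, hD1] at this
    have e0 : nullDeriv (X 0 : MvPolynomial (Fin (m + 2)) ℂ) = 1 := by simp [nullDeriv_apply]
    have e1 : nullDeriv (X 1 : MvPolynomial (Fin (m + 2)) ℂ) = C I := by simp [nullDeriv_apply]
    rw [e0, e1] at this
    refine mul_left_cancel₀ nullVar_ne_zero ?_
    rw [nullVar] at hc ⊢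
    linear_combination this - hg - hc
  have hc0 : c = 0 := by
    have := raising_harmonic (hh 0).2 r0
    have e1 : nullVar * conjDeriv (nullDeriv (u 0)) = -(C c * (2 * (k : MvPolynomial (Fin (m + 2)) ℂ) * nullVar ^ k)) := by
      rw [hxD, ← nullVar_mul_conjDeriv_pow, ← smul_eq_C_mul, map_neg, Derivation.map_smul,
        smul_eq_C_mul]
      ring
    have e2 : tailEuler (nullDeriv (u 0)) = 0 := by
      rw [hxD, tailEuler]
      refine Finset.sum_eq_zero fun a _ => ?_
      rw [map_neg, pderiv_C_mul, pderiv_pow, pderiv_tl_nullVar]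
      simp
    rw [e1, e2, hxD] at this
    simp only [map_neg, htt, if_true, Finset.sum_neg_distrib, Finset.sum_const, Finset.card_univ,
      Fintype.card_fin, nsmul_eq_mul] at this
    have h2 : C c * (((2 * k + 2 * m : ℕ) : MvPolynomial (Fin (m + 2)) ℂ) * nullVar ^ k) = 0 := by
      push_cast
      linear_combination -this
    have h3 : ((2 * k + 2 * m : ℕ) : MvPolynomial (Fin (m + 2)) ℂ) ≠ 0 :=
      Nat.cast_ne_zero.2 (by omega)
    exact C_eq_zero.1 ((mul_eq_zero.1 h2).resolve_right
      (mul_ne_zero h3 (pow_ne_zero _ nullVar_ne_zero)))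
  subst hc0
  have hut : ∀ b, ∃ c : ℂ, u (tl b) = C c * nullVar ^ (k + 1) := fun b =>
    eq_C_mul_nullVar_pow (hh _).1 (htD b) fun a => by simp [htt]
  choose c hcu using hut
  have hu0 : u 0 = -∑ a, C (c a) * (X (tl a) * nullVar ^ k) := by
    have hx' := hx
    rw [sum_eq_zero_add_one_add, hu1] at hx'
    refine mul_left_cancel₀ nullVar_ne_zero ?_
    have e : ∑ a, X (tl a) * u (tl a) = nullVar * ∑ a, C (c a) * (X (tl a) * nullVar ^ k) := by
      rw [Finset.mul_sum]
      refine Finset.sum_congr rfl fun a _ => ?_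
      rw [hcu]
      ring
    rw [e, C_0] at hx'
    linear_combination hx' + u 0 * nullVar.eq_def (m := m)
  refine ⟨c, funext_tl ?_ ?_ fun b => ?_⟩
  · simp [Finset.sum_apply, topTuple_zero, hu0, smul_eq_C_mul]
  · rw [hu1, hu0]
    simp only [Finset.sum_apply, Pi.smul_apply, topTuple_one, smul_eq_C_mul, C_0, zero_mul,
      sub_zero, mul_neg, Finset.mul_sum, Finset.sum_neg_distrib]
    exact congrArg _ (Finset.sum_congr rfl fun a _ => by ring)
  · simp [Finset.sum_apply, topTuple_tl, hcu, smul_eq_C_mul]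

theorem rot_zero_one_raising (a : Fin m) (u : Fin (m + 2) → MvPolynomial (Fin (m + 2)) ℂ) :
    rot 0 1 (raising a u) = raising a (rot 0 1 u) + I • raising a u := by
  have h1 := rot_rot_sub zero_ne_one' (tl_ne_zero a).symm (tl_ne_one a).symm u
  have h2 := rot_rot_sub zero_ne_one'.symm (tl_ne_one a).symm (tl_ne_zero a).symm u
  rw [rot_swap 0 1, rot_swap 0 1, map_neg] at h2
  simp only [raising, LinearMap.add_apply, LinearMap.smul_apply, map_add, map_smul, smul_add,
    smul_smul, Complex.I_mul_I]
  rw [sub_eq_iff_eq_add] at h1 h2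
  rw [h1, neg_eq_iff_eq_neg.1 h2]
  module

/-- A nonzero finite-dimensional invariant subspace contains a highest weight vector. -/
theorem exists_ne_zero_raising_eq_zero
    {W : Submodule ℂ (Fin (m + 2) → MvPolynomial (Fin (m + 2)) ℂ)} [Module.Finite ℂ W]
    (hW : ∀ r s, ∀ u ∈ W, rot r s u ∈ W) (h0 : W ≠ ⊥) :
    ∃ u ∈ W, u ≠ 0 ∧ ∀ a, raising a u = 0 := by
  have : Nontrivial W := Submodule.nontrivial_iff_ne_bot.2 h0
  let f : Module.End ℂ W := (rot 0 1).restrict (hW 0 1)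
  obtain ⟨μ, hμ, hmax⟩ := Set.exists_max_image {μ | f.HasEigenvalue μ} Complex.im
    f.finite_hasEigenvalue f.exists_eigenvalue
  obtain ⟨v, hv⟩ := Module.End.HasEigenvalue.exists_hasEigenvector hμ
  refine ⟨v, v.2, fun h => hv.2 (Subtype.ext h), fun a => ?_⟩
  by_contra hne
  have hmem : raising a (v : Fin (m + 2) → MvPolynomial (Fin (m + 2)) ℂ) ∈ W :=
    W.add_mem (hW _ _ _ v.2) (W.smul_mem _ (hW _ _ _ v.2))
  have hfv : rot 0 1 (v : Fin (m + 2) → MvPolynomial (Fin (m + 2)) ℂ) = μ • v :=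
    congrArg Subtype.val hv.apply_eq_smul
  have he : f.HasEigenvector (μ + I) ⟨_, hmem⟩ := by
    refine ⟨Module.End.mem_eigenspace_iff.2 (Subtype.ext ?_), fun h => hne (congrArg Subtype.val h)⟩
    change rot 0 1 (raising a (v : Fin (m + 2) → MvPolynomial (Fin (m + 2)) ℂ)) = _
    rw [rot_zero_one_raising, hfv, map_smul, ← add_smul]
    rfl
  have := hmax _ (Module.End.hasEigenvalue_of_hasEigenvector he)
  simp at this
  linarith

theorem rot_topTuple (k : ℕ) (a b c : Fin m) :
    rot (tl a) (tl b) (topTuple k c)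
      = (if c = b then topTuple k a else 0) - (if c = a then topTuple k b else 0) := by
  have hp : ∀ (t : Fin m) (d : ℕ), pderiv (tl t) (nullVar ^ d : MvPolynomial _ ℂ) = 0 := by
    intro t d
    rw [pderiv_pow, pderiv_tl_nullVar, mul_zero]
  have hX : ∀ t : Fin m, pderiv (tl t) (X (tl c) : MvPolynomial _ ℂ) = if c = t then 1 else 0 := by
    intro t
    simp [pderiv_X, Pi.single_apply]
  have hsub : ∀ j : Fin (m + 2),
      ((if c = b then topTuple k a else 0) - (if c = a then topTuple k b else 0) :
        Fin (m + 2) → MvPolynomial (Fin (m + 2)) ℂ) j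
      = (if c = b then topTuple k a j else 0) - (if c = a then topTuple k b j else 0) := by
    intro j
    split_ifs <;> rfl
  refine funext_tl ?_ ?_ fun t => ?_
  · rw [hsub, rot_apply, if_neg (tl_ne_zero a).symm, if_neg (tl_ne_zero b).symm]
    simp only [topTuple_zero, map_neg, pderiv_mul, hp, hX]
    split_ifs <;> ring
  · rw [hsub, rot_apply, if_neg (tl_ne_one a).symm, if_neg (tl_ne_one b).symm]
    simp only [topTuple_one, map_neg, pderiv_mul, pderiv_C, hp, hX]
    split_ifs <;> ring
  · rw [hsub, rot_apply]
    have hite : ∀ (i : Fin m) (P : Prop) [Decidable P],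
        pderiv (tl i) (if P then nullVar ^ (k + 1) else 0 : MvPolynomial _ ℂ) = 0 := by
      intro i P _
      split_ifs
      · exact hp i _
      · simp
    simp only [topTuple_tl, hite, tl_inj]
    grind

theorem topTuple_mem_of_sum_mem {k : ℕ} (hm : m ≠ 2)
    {W : Submodule ℂ (Fin (m + 2) → MvPolynomial (Fin (m + 2)) ℂ)}
    (hW : ∀ r s, ∀ u ∈ W, rot r s u ∈ W) {c : Fin m → ℂ} (hc : c ≠ 0)
    (hsum : ∑ a, c a • topTuple k a ∈ W) (d : Fin m) : topTuple k d ∈ W := by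
  obtain ⟨a, ha⟩ := Function.ne_iff.1 hc
  rcases Nat.lt_or_ge m 2 with h1 | h3
  · have : m = 1 := by have := a.isLt; omega
    subst this
    rw [Fin.sum_univ_one] at hsum
    rw [Subsingleton.elim d 0]
    rw [Subsingleton.elim a 0] at ha
    exact (W.smul_mem_iff ha).1 hsum
  have key : ∀ d, d ≠ a → topTuple k d ∈ W := by
    intro d hd
    obtain ⟨b, hb⟩ : ∃ b : Fin m, b ∉ ({a, d} : Finset (Fin m)) := by
      by_contra! hall
      have := Finset.card_le_card (Finset.subset_iff.2 fun x _ => hall x : Finset.univ ⊆ _)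
      have h2 := Finset.card_le_two (a := a) (b := d)
      rw [Finset.card_univ, Fintype.card_fin] at this
      omega
    simp only [Finset.mem_insert, Finset.mem_singleton, not_or] at hb
    have hL := hW (tl b) (tl d) _ (hW (tl a) (tl b) _ hsum)
    simp only [map_sum, map_smul, rot_topTuple, smul_sub, Finset.sum_sub_distrib, smul_ite,
      smul_zero, Finset.sum_ite_eq', Finset.mem_univ, if_true, map_sub,
      if_neg hb.2, if_neg hd.symm, if_neg (Ne.symm hb.1), sub_zero, zero_sub] at hL
    simp only [smul_neg, neg_neg] at hL
    exact (W.smul_mem_iff ha).1 hL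
  by_cases hd : d = a
  · subst hd
    have : Nontrivial (Fin m) := Fin.nontrivial_iff_two_le.2 h3
    obtain ⟨b, hb⟩ := exists_ne d
    have := hW (tl d) (tl b) _ (key b hb)
    rwa [rot_topTuple, if_pos rfl, if_neg hb, sub_zero] at this
  · exact key d hd

/-- Every nonzero invariant subspace of complex harmonic tuples contains all highest weight
tuples. -/
theorem topTuple_mem {k : ℕ} (hm0 : 0 < m) (hm : m ≠ 2)
    {W : Submodule ℂ (Fin (m + 2) → MvPolynomial (Fin (m + 2)) ℂ)}
    (hWH : W ≤ harmonicTuples ℂ (m + 2) (k + 1)) (hW : ∀ r s, ∀ u ∈ W, rot r s u ∈ W)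
    (h0 : W ≠ ⊥) (d : Fin m) : topTuple k d ∈ W := by
  have := finite_harmonicTuples (n := m + 2) (K := ℂ) (k + 1)
  have : Module.Finite ℂ W := Submodule.finiteDimensional_of_le hWH
  obtain ⟨u, huW, hu0, hu⟩ := exists_ne_zero_raising_eq_zero hW h0
  obtain ⟨c, rfl⟩ := exists_eq_sum_topTuple hm0 (hWH huW) hu
  exact topTuple_mem_of_sum_mem hm hW (by rintro rfl; simp at hu0) huW d

end Complex

section Real

variable {n : ℕ}

/-- The product of factorials `α!` of a multi-index. -/
noncomputable def multiFactorial (α : Fin n →₀ ℕ) : ℝ := ∏ i, ((α i).factorial : ℝ)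

theorem multiFactorial_pos (α : Fin n →₀ ℕ) : 0 < multiFactorial α :=
  Finset.prod_pos fun i _ => by exact_mod_cast Nat.factorial_pos _

theorem multiFactorial_add_single (α : Fin n →₀ ℕ) (r : Fin n) :
    multiFactorial (α + Finsupp.single r 1) = (α r + 1) * multiFactorial α := by
  rw [multiFactorial, multiFactorial, ← Finset.mul_prod_erase _ _ (Finset.mem_univ r),
    ← Finset.mul_prod_erase _ (fun i => ((α i).factorial : ℝ)) (Finset.mem_univ r), ← mul_assoc]
  congr 1
  · simp [Nat.factorial_succ]
  · refine Finset.prod_congr rfl fun i hi => ?_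
    simp [(Finset.ne_of_mem_erase hi).symm]

/-- The Fischer inner product `⟨p, q⟩ = ∑ α! p_α q_α`. -/
noncomputable def fischer : LinearMap.BilinForm ℝ (MvPolynomial (Fin n) ℝ) :=
  (basisMonomials (Fin n) ℝ).constr ℝ fun α => multiFactorial α • lcoeff ℝ α

theorem fischer_monomial (α : Fin n →₀ ℕ) (q : MvPolynomial (Fin n) ℝ) :
    fischer (monomial α 1) q = multiFactorial α * coeff α q := by
  have := (basisMonomials (Fin n) ℝ).constr_basis ℝ
    (fun α => multiFactorial α • lcoeff ℝ α) α
  rw [coe_basisMonomials] at this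
  rw [fischer, this]
  rfl

theorem fischer_apply (p q : MvPolynomial (Fin n) ℝ) :
    fischer p q = ∑ α ∈ p.support, multiFactorial α * (coeff α p * coeff α q) := by
  conv_lhs => rw [p.as_sum]
  simp only [map_sum, LinearMap.sum_apply]
  refine Finset.sum_congr rfl fun α _ => ?_
  rw [show monomial α (coeff α p) = coeff α p • monomial α (1 : ℝ) by simp [smul_monomial],
    map_smul, LinearMap.smul_apply, fischer_monomial, smul_eq_mul]
  ring

theorem fischer_monomial_right (p : MvPolynomial (Fin n) ℝ) (α : Fin n →₀ ℕ) (c : ℝ) :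
    fischer p (monomial α c) = multiFactorial α * (coeff α p * c) := by
  classical
  rw [fischer_apply, Finset.sum_eq_single α]
  · simp
  · intro β _ hβ
    simp [coeff_monomial, hβ.symm]
  · intro h
    simp [notMem_support_iff.1 h]

theorem fischer_comm (p q : MvPolynomial (Fin n) ℝ) : fischer p q = fischer q p := by
  induction q using MvPolynomial.induction_on' with
  | add q₁ q₂ h₁ h₂ => simp [h₁, h₂]
  | monomial α c =>
    rw [fischer_monomial_right,
      show monomial α c = c • monomial α (1 : ℝ) by simp [smul_monomial], map_smul,
      LinearMap.smul_apply, fischer_monomial, smul_eq_mul]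
    ring

theorem fischer_self_nonneg (p : MvPolynomial (Fin n) ℝ) : 0 ≤ fischer p p := by
  rw [fischer_apply]
  exact Finset.sum_nonneg fun α _ => mul_nonneg (multiFactorial_pos α).le (mul_self_nonneg _)

theorem eq_zero_of_fischer_self {p : MvPolynomial (Fin n) ℝ} (h : fischer p p = 0) : p = 0 := by
  rw [fischer_apply, Finset.sum_eq_zero_iff_of_nonneg
    fun α _ => mul_nonneg (multiFactorial_pos α).le (mul_self_nonneg _)] at h
  ext α
  rw [coeff_zero]
  by_contra hne
  have := h α (mem_support_iff.2 hne)
  simp [(multiFactorial_pos α).ne', hne] at this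

/-- Multiplication by `xᵣ` is adjoint to `∂ᵣ`. -/
theorem fischer_X_mul (r : Fin n) (p q : MvPolynomial (Fin n) ℝ) :
    fischer (X r * p) q = fischer p (pderiv r q) := by
  classical
  induction q using MvPolynomial.induction_on' with
  | add q₁ q₂ h₁ h₂ => simp [h₁, h₂]
  | monomial α c =>
    rw [pderiv_monomial, fischer_monomial_right, fischer_monomial_right, coeff_X_mul']
    split_ifs with h
    · have h' : α r ≠ 0 := Finsupp.mem_support_iff.1 h
      obtain ⟨β, rfl⟩ : ∃ β, α = β + Finsupp.single r 1 :=
        ⟨_, (Finsupp.sub_add_single_one_cancel h').symm⟩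
      rw [multiFactorial_add_single, add_tsub_cancel_right]
      simp
      ring
    · simp [Finsupp.notMem_support_iff.1 h]

theorem fischer_X_mul_pderiv (r s : Fin n) (p q : MvPolynomial (Fin n) ℝ) :
    fischer (X r * pderiv s p) q = fischer p (X s * pderiv r q) := by
  rw [fischer_X_mul, fischer_comm, ← fischer_X_mul, fischer_comm]

/-- The invariant inner product on tuples of polynomials. -/
noncomputable def tupleForm : LinearMap.BilinForm ℝ (Fin n → MvPolynomial (Fin n) ℝ) :=
  ∑ j, fischer.compl₁₂ (LinearMap.proj j) (LinearMap.proj j)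

theorem tupleForm_apply (u v : Fin n → MvPolynomial (Fin n) ℝ) :
    tupleForm u v = ∑ j, fischer (u j) (v j) := by
  simp [tupleForm, LinearMap.sum_apply]

theorem tupleForm_comm (u v : Fin n → MvPolynomial (Fin n) ℝ) :
    tupleForm u v = tupleForm v u := by
  simp only [tupleForm_apply, fischer_comm (u _)]

theorem eq_zero_of_tupleForm_self {u : Fin n → MvPolynomial (Fin n) ℝ}
    (h : tupleForm u u = 0) : u = 0 := by
  rw [tupleForm_apply, Finset.sum_eq_zero_iff_of_nonneg fun j _ => fischer_self_nonneg _] at h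
  exact funext fun j => eq_zero_of_fischer_self (h j (Finset.mem_univ j))

theorem tupleForm_rot (r s : Fin n) (u v : Fin n → MvPolynomial (Fin n) ℝ) :
    tupleForm (rot r s u) v = -tupleForm u (rot r s v) := by
  have hl : ∀ (P : Prop) [Decidable P] (p q : MvPolynomial (Fin n) ℝ),
      fischer (if P then p else 0) q = if P then fischer p q else 0 := by
    intro P _ p q
    split_ifs <;> simp
  have hr : ∀ (P : Prop) [Decidable P] (p q : MvPolynomial (Fin n) ℝ),
      fischer p (if P then q else 0) = if P then fischer p q else 0 := by
    intro P _ p q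
    split_ifs <;> simp
  simp only [tupleForm_apply, rot_apply, map_add, map_sub, LinearMap.add_apply,
    LinearMap.sub_apply, fischer_X_mul_pderiv, hl, hr, Finset.sum_add_distrib,
    Finset.sum_sub_distrib, Finset.sum_ite_eq', Finset.mem_univ, if_true]
  ring

theorem isCompl_tupleForm_orthogonal (W : Submodule ℝ (Fin n → MvPolynomial (Fin n) ℝ))
    [Module.Finite ℝ W] : IsCompl W (tupleForm.orthogonal W) := by
  have hnd : (tupleForm.restrict W).Nondegenerate :=
    ⟨fun w hw => Subtype.ext (eq_zero_of_tupleForm_self (hw w)),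
      fun w hw => Subtype.ext (eq_zero_of_tupleForm_self (hw w))⟩
  refine ⟨Submodule.disjoint_def.2 fun w hw hw' => eq_zero_of_tupleForm_self (hw' w hw),
    codisjoint_iff.2 (eq_top_iff.2 fun u _ => ?_)⟩
  obtain ⟨w, hw⟩ := ((tupleForm.restrict W).toDual hnd).surjective ((tupleForm u).comp W.subtype)
  refine Submodule.mem_sup.2 ⟨w, w.2, u - w, fun v hv => ?_, add_sub_cancel _ _⟩
  have : tupleForm (w : Fin n → MvPolynomial (Fin n) ℝ) v = tupleForm u v :=
    LinearMap.congr_fun hw ⟨v, hv⟩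
  change tupleForm v (u - w) = 0
  rw [tupleForm_comm, map_sub, LinearMap.sub_apply, this, sub_self]

/-- The coefficientwise real part of a complex polynomial. -/
noncomputable def rePart {σ : Type*} : MvPolynomial σ ℂ →ₗ[ℝ] MvPolynomial σ ℝ :=
  (basisMonomials σ ℝ).repr.symm.toLinearMap ∘ₗ Finsupp.mapRange.linearMap Complex.reLm ∘ₗ
    (basisMonomials σ ℂ).repr.toLinearMap.restrictScalars ℝ

theorem coeff_rePart {σ : Type*} (p : MvPolynomial σ ℂ) (α : σ →₀ ℕ) :
    coeff α (rePart p) = (coeff α p).re := rfl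

/-- The complex tuple with the same coefficients as a real one. -/
noncomputable def complexify (u : Fin n → MvPolynomial (Fin n) ℝ) :
    Fin n → MvPolynomial (Fin n) ℂ := fun j => map Complex.ofRealHom (u j)

theorem complexify_rot (r s : Fin n) (u : Fin n → MvPolynomial (Fin n) ℝ) :
    complexify (rot r s u) = rot r s (complexify u) := by
  funext j
  simp only [complexify, rot_apply, map_sub, map_add, map_mul, map_X, pderiv_map]
  split_ifs <;> simp

theorem complexify_mem {k : ℕ} {u : Fin n → MvPolynomial (Fin n) ℝ}
    (hu : u ∈ harmonicTuples ℝ n k) : complexify u ∈ harmonicTuples ℂ n k := by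
  refine ⟨fun r => ⟨(hu.1 r).1.map _, ?_⟩, ?_⟩
  · have := congrArg (map Complex.ofRealHom) (hu.1 r).2
    simpa only [laplacian_apply, complexify, pderiv_map, map_sum, map_zero] using this
  · have := congrArg (map Complex.ofRealHom) hu.2
    simpa only [complexify, map_sum, map_zero, map_mul, map_X] using this

/-- The complexification of a real subspace of tuples. -/
noncomputable def complexSpan (W : Submodule ℝ (Fin n → MvPolynomial (Fin n) ℝ)) :
    Submodule ℂ (Fin n → MvPolynomial (Fin n) ℂ) := Submodule.span ℂ (complexify '' W)

theorem rePart_mem {W : Submodule ℝ (Fin n → MvPolynomial (Fin n) ℝ)}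
    {u : Fin n → MvPolynomial (Fin n) ℂ} (hu : u ∈ complexSpan W) :
    (fun j => rePart (u j)) ∈ W := by
  suffices h : ∀ c : ℂ, (fun j => rePart ((c • u) j)) ∈ W by simpa using h 1
  refine Submodule.span_induction ?_ ?_ ?_ ?_ hu
  · rintro _ ⟨w, hw, rfl⟩ c
    convert W.smul_mem c.re hw using 1
    funext j
    ext α
    simp [coeff_rePart, complexify, coeff_map]
  · intro c
    convert W.zero_mem using 1
    funext j
    simp
  · intro u v _ _ hu hv c
    convert W.add_mem (hu c) (hv c) using 1
    funext j
    simp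
  · intro a u _ hu c
    simpa [smul_smul] using hu (c * a)

theorem disjoint_complexSpan {W W' : Submodule ℝ (Fin n → MvPolynomial (Fin n) ℝ)}
    (h : Disjoint W W') : Disjoint (complexSpan W) (complexSpan W') := by
  rw [Submodule.disjoint_def] at h ⊢
  intro u hu hu'
  have hre := h _ (rePart_mem hu) (rePart_mem hu')
  have him := h _ (rePart_mem (Submodule.smul_mem _ Complex.I hu))
    (rePart_mem (Submodule.smul_mem _ Complex.I hu'))
  funext j
  ext α
  have h1 := congrArg (coeff α) (congrFun hre j)
  have h2 := congrArg (coeff α) (congrFun him j)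
  simp only [coeff_rePart, Pi.smul_apply, coeff_smul, Pi.zero_apply, coeff_zero, smul_eq_mul,
    Complex.I_mul_re, neg_eq_zero] at h1 h2
  exact Complex.ext h1 h2

theorem complexSpan_ne_bot {W : Submodule ℝ (Fin n → MvPolynomial (Fin n) ℝ)} (h : W ≠ ⊥) :
    complexSpan W ≠ ⊥ := by
  obtain ⟨w, hw, hw0⟩ := Submodule.exists_mem_ne_zero_of_ne_bot h
  intro hb
  have : complexify w ∈ complexSpan W := Submodule.subset_span ⟨w, hw, rfl⟩
  rw [hb, Submodule.mem_bot] at this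
  refine hw0 (funext fun j => map_injective _ Complex.ofRealHom.injective ?_)
  simpa [complexify] using congrFun this j

theorem topTuple_mem_complexSpan {m k : ℕ} (hm0 : 0 < m) (hm : m ≠ 2)
    {W : Submodule ℝ (Fin (m + 2) → MvPolynomial (Fin (m + 2)) ℝ)}
    (hWH : W ≤ harmonicTuples ℝ (m + 2) (k + 1)) (hW : ∀ r s, ∀ u ∈ W, rot r s u ∈ W)
    (h0 : W ≠ ⊥) (d : Fin m) : topTuple k d ∈ complexSpan W := by
  refine topTuple_mem hm0 hm ?_ (fun r s u hu => ?_) (complexSpan_ne_bot h0) d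
  · refine Submodule.span_le.2 ?_
    rintro _ ⟨w, hw, rfl⟩
    exact complexify_mem (hWH hw)
  · have : complexSpan W ≤ (complexSpan W).comap (rot r s) := by
      refine Submodule.span_le.2 ?_
      rintro _ ⟨w, hw, rfl⟩
      exact Submodule.subset_span ⟨_, hW r s w hw, complexify_rot r s w⟩
    exact this hu

theorem eq_bot_or_eq_harmonicTuples {m k : ℕ} (hm0 : 0 < m) (hm : m ≠ 2)
    {W : Submodule ℝ (Fin (m + 2) → MvPolynomial (Fin (m + 2)) ℝ)}
    (hWH : W ≤ harmonicTuples ℝ (m + 2) (k + 1)) (hW : ∀ r s, ∀ u ∈ W, rot r s u ∈ W) :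
    W = ⊥ ∨ W = harmonicTuples ℝ (m + 2) (k + 1) := by
  by_contra! hne
  have := finite_harmonicTuples (n := m + 2) (K := ℝ) (k + 1)
  have : Module.Finite ℝ W := Submodule.finiteDimensional_of_le hWH
  have hcompl := isCompl_tupleForm_orthogonal W
  set W' := tupleForm.orthogonal W ⊓ harmonicTuples ℝ (m + 2) (k + 1) with hW'
  have hinv : ∀ r s, ∀ u ∈ W', rot r s u ∈ W' := by
    rintro r s u ⟨hu, huH⟩
    refine ⟨fun w hw => ?_, rot_mem_harmonicTuples r s huH⟩
    have := tupleForm_rot r s w u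
    rw [hu _ (hW r s w hw)] at this
    exact neg_eq_zero.1 this.symm
  have hW'0 : W' ≠ ⊥ := by
    intro hbot
    refine hne.2 (le_antisymm hWH fun u hu => ?_)
    obtain ⟨w, hw, w', hw', rfl⟩ := Submodule.mem_sup.1
      (hcompl.sup_eq_top ▸ Submodule.mem_top : u ∈ W ⊔ tupleForm.orthogonal W)
    have hmem : w' ∈ W' := ⟨hw', by simpa using Submodule.sub_mem _ hu (hWH hw)⟩
    rw [hbot, Submodule.mem_bot] at hmem
    simpa [hmem] using hw
  have hdisj := disjoint_complexSpan (hcompl.disjoint.mono_right (inf_le_left : W' ≤ _))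
  exact topTuple_ne_zero k ⟨0, hm0⟩ (Submodule.disjoint_def.1 hdisj _
    (topTuple_mem_complexSpan hm0 hm hWH hW hne.1 _)
    (topTuple_mem_complexSpan hm0 hm inf_le_right hinv hW'0 _))

theorem Lop_eq_rot (r s : Fin n) (u : Fin n → MvPolynomial (Fin n) ℝ) :
    Lop r s u = rot r s u := rfl

theorem Hk2Set_eq (k : ℕ) : Hk2Set n k = harmonicTuples ℝ n k := by
  ext u
  simp only [Hk2Set, lap, SetLike.mem_coe, mem_harmonicTuples, laplacian_apply, Set.mem_ofPred_eq]

end Real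

end OrthogonalTuples

/-- for `n ≥ 3`, `n ≠ 4` and `k ≥ 1`, the subspace `Ĥ_{k,2}` is invariant
under all `L_{r,s}` and irreducible: its only `L_{r,s}`-invariant ℝ-subspaces are `{0}`
and itself. -/
theorem Hk2_irreducible (n : ℕ) (hn : 3 ≤ n) (hn4 : n ≠ 4) (k : ℕ) (hk : 1 ≤ k) :
    (∀ r s : Fin n, r < s → ∀ u ∈ Hk2Set n k, Lop r s u ∈ Hk2Set n k) ∧
    (∀ W : Submodule ℝ (Fin n → MvPolynomial (Fin n) ℝ),
      (W : Set (Fin n → MvPolynomial (Fin n) ℝ)) ⊆ Hk2Set n k →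
      (∀ r s : Fin n, r < s → ∀ u ∈ W, Lop r s u ∈ W) →
      (W : Set (Fin n → MvPolynomial (Fin n) ℝ)) = {0} ∨
        (W : Set (Fin n → MvPolynomial (Fin n) ℝ)) = Hk2Set n k) := by
  simp only [OrthogonalTuples.Hk2Set_eq, OrthogonalTuples.Lop_eq_rot]
  refine ⟨fun r s _ u hu => OrthogonalTuples.rot_mem_harmonicTuples r s hu, fun W hWH hW => ?_⟩
  obtain ⟨m, rfl⟩ : ∃ m, n = m + 2 := ⟨n - 2, by omega⟩
  obtain ⟨k, rfl⟩ : ∃ l, k = l + 1 := ⟨k - 1, by omega⟩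
  rcases OrthogonalTuples.eq_bot_or_eq_harmonicTuples (by omega) (by omega) hWH
    (OrthogonalTuples.rot_mem_of_lt hW) with h | h
  · exact Or.inl (by rw [h, Submodule.bot_coe])
  · exact Or.inr (by rw [h])
end

section
/- For every integer k ≥ 2, the subspace φ(H_{k−1}) ⊆ ℝ[x₁,…,xₙ]ⁿ is irreducible under the o(n,ℝ)-action: it is invariant under all the operators L_{r,s} (1 ≤ r < s ≤ n), and its only L_{r,s}-invariant ℝ-subspaces are {0} and φ(H_{k−1}) itself. -/
open MvPolynomial

/-- `φ = φ₁ + c·φ₂` with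
`φ₁(f) = (k−1)[(∑ᵣ xᵣ²)·ψ(f) − (2k+n−4)·f·(x₁,…,xₙ)]`,
`φ₂(f) = (∑ᵣ xᵣ²)·ψ(f)`, where `ψ` is the gradient map, and
`c = (2k+n−2)(k+n−3)(k−1) / (2(b⁻¹(2k+n−4)+k−1))`. -/
noncomputable def phiMap {n : ℕ} (b : ℝ) (k : ℕ) (f : MvPolynomial (Fin n) ℝ) :
    Fin n → MvPolynomial (Fin n) ℝ :=
  fun j =>
    ((k : ℝ) - 1) • ((∑ r : Fin n, X r ^ 2) * pderiv j f
        - (2 * (k : ℝ) + n - 4) • (f * X j))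
    + ((2 * (k : ℝ) + n - 2) * ((k : ℝ) + n - 3) * ((k : ℝ) - 1) /
          (2 * (b⁻¹ * (2 * (k : ℝ) + n - 4) + (k : ℝ) - 1))) •
        ((∑ r : Fin n, X r ^ 2) * pderiv j f)

/-- The set `φ(H_{k-1})`. -/
def phiH (n : ℕ) (b : ℝ) (k : ℕ) : Set (Fin n → MvPolynomial (Fin n) ℝ) :=
  {z | ∃ f : MvPolynomial (Fin n) ℝ,
    f.IsHomogeneous (k - 1) ∧ lap f = 0 ∧ z = phiMap b k f}

/-- The infinitesimal rotation `x_r ∂_s - x_s ∂_r`. -/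
noncomputable def rot {n : ℕ} (r s : Fin n) :
    Derivation ℝ (MvPolynomial (Fin n) ℝ) (MvPolynomial (Fin n) ℝ) :=
  (X r : MvPolynomial (Fin n) ℝ) • pderiv s - (X s : MvPolynomial (Fin n) ℝ) • pderiv r

section Rotation

variable {n : ℕ}

lemma rot_apply (r s : Fin n) (f : MvPolynomial (Fin n) ℝ) :
    rot r s f = X r * pderiv s f - X s * pderiv r f := rfl

lemma rot_swap (r s : Fin n) (f : MvPolynomial (Fin n) ℝ) : rot s r f = -rot r s f := by
  simp [rot_apply]

lemma rot_self (r : Fin n) (f : MvPolynomial (Fin n) ℝ) : rot r r f = 0 := by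
  simp [rot_apply]

lemma pderiv_comm (i j : Fin n) (f : MvPolynomial (Fin n) ℝ) :
    pderiv i (pderiv j f) = pderiv j (pderiv i f) := by
  rcases eq_or_ne i j with rfl | h
  · rfl
  · ext α
    simp only [coeff_pderiv, Finsupp.add_apply, Finsupp.single_eq_of_ne h,
      Finsupp.single_eq_of_ne h.symm, add_right_comm α (Finsupp.single i 1), add_zero]
    ring

lemma pderiv_rot (r s j : Fin n) (f : MvPolynomial (Fin n) ℝ) :
    pderiv j (rot r s f) = rot r s (pderiv j f)
      + (if j = r then pderiv s f else 0) - (if j = s then pderiv r f else 0) := by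
  have hX (i : Fin n) : pderiv j (X i : MvPolynomial (Fin n) ℝ) = if j = i then 1 else 0 := by
    simp [Pi.single_apply, eq_comm]
  rw [rot_apply, rot_apply, map_sub, pderiv_mul, pderiv_mul, hX, hX, pderiv_comm j s,
    pderiv_comm j r]
  split_ifs <;> ring

lemma rot_X (r s j : Fin n) :
    rot r s (X j) = (if j = s then X r else 0) - (if j = r then X s else 0) := by
  simp only [rot_apply, pderiv_X, Pi.single_apply]
  split_ifs <;> simp_all

lemma rot_sum_X_sq (r s : Fin n) : rot r s (∑ i : Fin n, X i ^ 2) = 0 := by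
  have h (i : Fin n) : rot r s (X i ^ 2) =
      (if i = s then 2 * X i * X r else 0) - (if i = r then 2 * X i * X s else 0) := by
    rw [Derivation.leibniz_pow, rot_X]
    split_ifs <;> simp <;> ring
  simp only [map_sum, h, Finset.sum_sub_distrib, Finset.sum_ite_eq', Finset.mem_univ, if_true]
  ring

lemma lap_rot (r s : Fin n) (f : MvPolynomial (Fin n) ℝ) :
    lap (rot r s f) = rot r s (lap f) := by
  have h (i : Fin n) : pderiv i (pderiv i (rot r s f)) = rot r s (pderiv i (pderiv i f))
      + ((if i = r then 2 * pderiv s (pderiv i f) else 0)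
        - (if i = s then 2 * pderiv r (pderiv i f) else 0)) := by
    rw [pderiv_rot, map_sub, map_add, pderiv_rot]
    split_ifs <;> simp [pderiv_comm i] <;> ring
  simp only [lap, h, map_sum, Finset.sum_add_distrib, Finset.sum_sub_distrib,
    Finset.sum_ite_eq', Finset.mem_univ, if_true]
  rw [pderiv_comm r s]
  ring

lemma isHomogeneous_rot {m : ℕ} (hm : m ≠ 0) (r s : Fin n) {f : MvPolynomial (Fin n) ℝ}
    (hf : f.IsHomogeneous m) : (rot r s f).IsHomogeneous m := by
  have h (i j : Fin n) : (X i * pderiv j f).IsHomogeneous m := by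
    have := (isHomogeneous_X ℝ i).mul (hf.pderiv (i := j))
    rwa [show 1 + (m - 1) = m by omega] at this
  exact (h r s).sub (h s r)

/-- `φ` intertwines the rotations on polynomials with the action on tuples. -/
lemma Lop_phiMap (b : ℝ) (k : ℕ) (r s : Fin n) (f : MvPolynomial (Fin n) ℝ) :
    Lop r s (phiMap b k f) = phiMap b k (rot r s f) := by
  funext j
  have hq (i : Fin n) : rot r s ((∑ l : Fin n, X l ^ 2) * pderiv i f) =
      (∑ l : Fin n, X l ^ 2) * rot r s (pderiv i f) := by
    rw [Derivation.leibniz, rot_sum_X_sq, smul_zero, add_zero, smul_eq_mul]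
  have hx (i : Fin n) : rot r s (f * X i) = rot r s f * X i
      + ((if i = s then f * X r else 0) - (if i = r then f * X s else 0)) := by
    rw [Derivation.leibniz, rot_X]
    split_ifs <;> simp <;> ring
  simp only [Lop, ← rot_apply]
  simp only [phiMap, map_add, map_sub, Derivation.map_smul, hq, hx, pderiv_rot]
  generalize ∑ l : Fin n, (X l : MvPolynomial (Fin n) ℝ) ^ 2 = q
  split_ifs <;> simp_all [smul_eq_C_mul] <;> ring

lemma rot_mem {U : Submodule ℝ (MvPolynomial (Fin n) ℝ)}
    (hU : ∀ r s : Fin n, r < s → ∀ f ∈ U, rot r s f ∈ U) (r s : Fin n)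
    {f : MvPolynomial (Fin n) ℝ} (hf : f ∈ U) : rot r s f ∈ U := by
  rcases lt_trichotomy r s with h | rfl | h
  · exact hU r s h f hf
  · simp [rot_self]
  · rw [rot_swap]
    exact U.neg_mem (hU s r h f hf)

end Rotation

section Fischer

variable {n : ℕ}

/-- The Fischer inner product `⟨x^α, g⟩ = α! g_α`. -/
noncomputable def fischer (n : ℕ) :
    MvPolynomial (Fin n) ℝ →ₗ[ℝ] MvPolynomial (Fin n) ℝ →ₗ[ℝ] ℝ :=
  (basisMonomials (Fin n) ℝ).constr ℝ fun α => (∏ i, ((α i).factorial : ℝ)) • lcoeff ℝ α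

lemma fischer_monomial (α : Fin n →₀ ℕ) (c : ℝ) (g : MvPolynomial (Fin n) ℝ) :
    fischer n (monomial α c) g = c * ((∏ i, ((α i).factorial : ℝ)) * coeff α g) := by
  have h : monomial α c = c • basisMonomials (Fin n) ℝ α := by simp [smul_monomial]
  rw [h, fischer, map_smul, Module.Basis.constr_basis]
  simp

lemma fischer_apply (f g : MvPolynomial (Fin n) ℝ) :
    fischer n f g =
      ∑ α ∈ f.support, coeff α f * ((∏ i, ((α i).factorial : ℝ)) * coeff α g) := by
  conv_lhs => rw [f.as_sum]
  simp only [map_sum, LinearMap.sum_apply, fischer_monomial]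

lemma fischer_comm (f g : MvPolynomial (Fin n) ℝ) : fischer n f g = fischer n g f := by
  rw [fischer_apply, fischer_apply]
  have h1 := Finset.sum_subset (f := fun α =>
    coeff α f * ((∏ i, ((α i).factorial : ℝ)) * coeff α g))
    (Finset.subset_union_left (s₁ := f.support) (s₂ := g.support)) (by simp_all)
  have h2 := Finset.sum_subset (f := fun α =>
    coeff α g * ((∏ i, ((α i).factorial : ℝ)) * coeff α f))
    (Finset.subset_union_right (s₁ := f.support) (s₂ := g.support)) (by simp_all)
  rw [h1, h2]
  exact Finset.sum_congr rfl fun α _ => by ring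

lemma eq_zero_of_fischer_self {f : MvPolynomial (Fin n) ℝ} (h : fischer n f f = 0) : f = 0 := by
  rw [fischer_apply, Finset.sum_eq_zero_iff_of_nonneg] at h
  · ext α
    by_contra hα
    have h1 := h α (mem_support_iff.2 hα)
    have h2 : (∏ i, ((α i).factorial : ℝ)) ≠ 0 :=
      Finset.prod_ne_zero_iff.2 fun i _ => by positivity
    simp_all
  · intro α _
    have : 0 ≤ (∏ i, ((α i).factorial : ℝ)) * coeff α f ^ 2 := by positivity
    linarith

lemma fischer_X_mul (r : Fin n) (f g : MvPolynomial (Fin n) ℝ) :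
    fischer n (X r * f) g = fischer n f (pderiv r g) := by
  induction f using MvPolynomial.induction_on' with
  | monomial α c =>
    have h : X r * monomial α c = monomial (α + Finsupp.single r 1) c := by
      rw [mul_comm, X, monomial_mul, mul_one]
    rw [h, fischer_monomial, fischer_monomial, coeff_pderiv,
      ← Finset.mul_prod_erase _ _ (Finset.mem_univ r),
      ← Finset.mul_prod_erase Finset.univ (fun i => ((α i).factorial : ℝ)) (Finset.mem_univ r)]
    have hp : ∏ i ∈ Finset.univ.erase r,
        (((α + Finsupp.single r 1 : Fin n →₀ ℕ) i).factorial : ℝ) =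
        ∏ i ∈ Finset.univ.erase r, ((α i).factorial : ℝ) :=
      Finset.prod_congr rfl fun i hi => by
        simp [Finsupp.single_eq_of_ne (Finset.ne_of_mem_erase hi)]
    rw [hp]
    simp only [Finsupp.add_apply, Finsupp.single_eq_same, Nat.factorial_succ]
    push_cast
    ring
  | add p q hp hq => simp [mul_add, hp, hq]

lemma fischer_rot (r s : Fin n) (f g : MvPolynomial (Fin n) ℝ) :
    fischer n (rot r s f) g = -fischer n f (rot r s g) := by
  have h (i j : Fin n) : fischer n (X i * pderiv j f) g = fischer n f (X j * pderiv i g) := by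
    rw [fischer_X_mul, fischer_comm, ← fischer_X_mul, fischer_comm]
  simp [rot_apply, h]

lemma exists_fischer_eq (U : Submodule ℝ (MvPolynomial (Fin n) ℝ)) [FiniteDimensional ℝ U]
    (l : MvPolynomial (Fin n) ℝ →ₗ[ℝ] ℝ) : ∃ z ∈ U, ∀ f ∈ U, fischer n z f = l f := by
  let T : U →ₗ[ℝ] Module.Dual ℝ U := (fischer n).domRestrict₁₂ U U
  have hT : Function.Injective T := by
    rw [injective_iff_map_eq_zero]
    intro z hz
    have := congrArg (fun g => g z) hz
    exact Subtype.ext (eq_zero_of_fischer_self this)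
  obtain ⟨z, hz⟩ := (LinearMap.injective_iff_surjective_of_finrank_eq_finrank
    Subspace.dual_finrank_eq.symm).1 hT (l.domRestrict U)
  exact ⟨z, z.2, fun f hf => congrArg (fun g => g ⟨f, hf⟩) hz⟩

end Fischer

section Zonal

variable {n : ℕ}

lemma eq_single_of_degree_eq {m : ℕ} {o : Fin n} {α : Fin n →₀ ℕ} (hα : α.degree = m)
    (h : ∀ r, r ≠ o → α r = 0) : α = Finsupp.single o m := by
  have h1 : α = Finsupp.single o (α o) := by
    ext r
    by_cases hr : r = o
    · simp [hr]
    · simp [h r hr, Finsupp.single_eq_of_ne hr]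
  have h2 : α o = m := by rw [← hα, h1]; simp
  rwa [h2] at h1

lemma exists_eq_add_single {α : Fin n →₀ ℕ} {r : Fin n} (h : α r ≠ 0) :
    ∃ β, α = β + Finsupp.single r 1 :=
  ⟨α - Finsupp.single r 1, (tsub_add_cancel_of_le
    (Finsupp.single_le_iff.2 (Nat.one_le_iff_ne_zero.2 h))).symm⟩

lemma coeff_X_mul_of_eq_zero {r : Fin n} {α : Fin n →₀ ℕ} (h : α r = 0)
    (g : MvPolynomial (Fin n) ℝ) : coeff α (X r * g) = 0 := by
  rw [coeff_X_mul', if_neg (by simpa using h)]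

lemma coeff_X_mul_pderiv (r : Fin n) (α : Fin n →₀ ℕ) (g : MvPolynomial (Fin n) ℝ) :
    coeff α (X r * pderiv r g) = α r * coeff α g := by
  by_cases h : α r = 0
  · simp [coeff_X_mul_of_eq_zero h, h]
  · obtain ⟨β, rfl⟩ := exists_eq_add_single h
    rw [add_comm β, coeff_X_mul, coeff_pderiv, add_comm β]
    simp
    ring

/-- A rotation-invariant space of homogeneous polynomials which all vanish at a basis vector
is zero. -/
lemma eq_zero_of_coeff_single_eq_zero {m : ℕ} {o : Fin n}
    {U : Submodule ℝ (MvPolynomial (Fin n) ℝ)} (hU : U ≤ homogeneousSubmodule (Fin n) ℝ m)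
    (hinv : ∀ r s : Fin n, ∀ f ∈ U, rot r s f ∈ U)
    (h0 : ∀ f ∈ U, coeff (Finsupp.single o m) f = 0) : U = ⊥ := by
  have key (N : ℕ) : ∀ f ∈ U, ∀ α : Fin n →₀ ℕ, α.degree = m → m ≤ α o + N →
      coeff α f = 0 := by
    induction N with
    | zero =>
      intro f hf α hα hN
      rw [eq_single_of_degree_eq (o := o) hα, h0 f hf]
      intro r hr
      by_contra hne
      obtain ⟨β, rfl⟩ := exists_eq_add_single hne
      have := Finsupp.le_degree o β
      simp [Finsupp.single_eq_of_ne hr.symm] at hα hN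
      omega
    | succ N ih =>
      intro f hf α hα hN
      by_cases hr : ∀ r, r ≠ o → α r = 0
      · rw [eq_single_of_degree_eq hα hr, h0 f hf]
      push Not at hr
      obtain ⟨r, hro, hr⟩ := hr
      obtain ⟨β, rfl⟩ := exists_eq_add_single hr
      have h1 := ih _ (hinv o r f hf) (Finsupp.single o 1 + β)
        (by simp at hα ⊢; omega) (by simp [Finsupp.single_eq_of_ne hro.symm] at hN ⊢; omega)
      rw [rot_apply, coeff_sub, coeff_X_mul, coeff_pderiv] at h1
      have h2 : coeff (Finsupp.single o 1 + β) (X r * pderiv o f) = 0 := by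
        by_cases hβ : β r = 0
        · exact coeff_X_mul_of_eq_zero (by simp [hβ, Finsupp.single_eq_of_ne hro]) _
        obtain ⟨γ, rfl⟩ := exists_eq_add_single hβ
        rw [show Finsupp.single o 1 + (γ + Finsupp.single r 1) =
          Finsupp.single r 1 + (γ + Finsupp.single o 1) by abel, coeff_X_mul, coeff_pderiv,
          ih f hf, zero_mul]
        · simp at hα ⊢; omega
        · simp [Finsupp.single_eq_of_ne hro.symm] at hN ⊢; omega
      rw [h2, sub_zero] at h1
      exact (mul_eq_zero.1 h1).resolve_right (by positivity)
  rw [eq_bot_iff]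
  intro f hf
  rw [Submodule.mem_bot]
  ext α
  by_cases hα : α.degree = m
  · simpa using key m f hf α hα (by omega)
  · simpa using (hU hf : f.IsHomogeneous m).coeff_eq_zero hα

/-- A zonal harmonic polynomial is determined by its value at the pole. -/
lemma zonal_eq_zero {m : ℕ} {o p q : Fin n} (hpo : p ≠ o) (hpq : p ≠ q) (hqo : q ≠ o)
    {f : MvPolynomial (Fin n) ℝ} (hf : f.IsHomogeneous m) (hlap : lap f = 0)
    (hrot : ∀ r s : Fin n, r ≠ o → s ≠ o → rot r s f = 0)
    (h0 : coeff (Finsupp.single o m) f = 0) : f = 0 := by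
  have hrot' (r s : Fin n) (hr : r ≠ o) (hs : s ≠ o) : X r * pderiv s f = X s * pderiv r f :=
    sub_eq_zero.1 (hrot r s hr hs)
  obtain ⟨h, hh⟩ : X p ∣ pderiv p f := by
    have h1 : X p ∣ X q * pderiv p f := ⟨_, hrot' q p hqo hpo⟩
    refine (X_dvd_mul_iff.1 h1).resolve_left fun h2 => ?_
    rw [X_dvd_X] at h2
    exact hpq h2
  have hgrad (r : Fin n) (hr : r ≠ o) : pderiv r f = X r * h := by
    apply mul_left_cancel₀ (X_ne_zero (R := ℝ) p)
    rw [hrot' p r hpo hr, hh]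
    ring
  have hcoeff (α : Fin n →₀ ℕ)
      (hα : coeff (α + Finsupp.single o 1 + Finsupp.single o 1) f = 0) : coeff α h = 0 := by
    have h1 : coeff α (lap f) = 0 := by rw [hlap, coeff_zero]
    rw [lap, ← Finset.add_sum_erase _ _ (Finset.mem_univ o), coeff_add, coeff_pderiv,
      coeff_pderiv, hα, coeff_sum] at h1
    have h2 : ∑ r ∈ Finset.univ.erase o, coeff α (pderiv r (pderiv r f)) =
        (∑ r ∈ Finset.univ.erase o, (1 + (α r : ℝ))) * coeff α h := by
      rw [Finset.sum_mul]
      refine Finset.sum_congr rfl fun r hr => ?_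
      rw [hgrad r (Finset.ne_of_mem_erase hr), pderiv_mul, coeff_add, coeff_X_mul_pderiv]
      simp
      ring
    rw [h2, zero_mul, zero_mul, zero_add] at h1
    refine (mul_eq_zero.1 h1).resolve_left (ne_of_gt ?_)
    exact Finset.sum_pos (fun r _ => by positivity) ⟨p, by simp [hpo]⟩
  have key (N : ℕ) : ∀ α : Fin n →₀ ℕ, α.degree = m → m ≤ α o + N → coeff α f = 0 := by
    induction N using Nat.strong_induction_on with
    | _ N ih =>
    intro α hα hN
    by_cases hr : ∀ r, r ≠ o → α r = 0
    · rw [eq_single_of_degree_eq hα hr, h0]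
    push Not at hr
    obtain ⟨r, hro, hr⟩ := hr
    obtain ⟨β, rfl⟩ := exists_eq_add_single hr
    have h1 : coeff β (pderiv r f) = 0 := by
      rw [hgrad r hro]
      by_cases hβ : β r = 0
      · exact coeff_X_mul_of_eq_zero hβ _
      obtain ⟨γ, rfl⟩ := exists_eq_add_single hβ
      rw [add_comm γ, coeff_X_mul]
      have hγ := Finsupp.le_degree o γ
      simp [Finsupp.single_eq_of_ne hro.symm] at hα hN
      apply hcoeff
      apply ih (N - 2) (by omega)
      · simp; omega
      · simp; omega
    rw [coeff_pderiv] at h1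
    exact (mul_eq_zero.1 h1).resolve_right (by positivity)
  ext α
  by_cases hα : α.degree = m
  · simpa using key m α hα (by omega)
  · simpa using hf.coeff_eq_zero hα

/-- A nonzero rotation-invariant space of homogeneous polynomials contains a polynomial which
does not vanish at the pole and is annihilated by the rotations fixing the pole. -/
lemma exists_zonal {m : ℕ} (o : Fin n) {U : Submodule ℝ (MvPolynomial (Fin n) ℝ)}
    (hU : U ≤ homogeneousSubmodule (Fin n) ℝ m)
    (hinv : ∀ r s : Fin n, ∀ f ∈ U, rot r s f ∈ U) (hne : U ≠ ⊥) :
    ∃ z ∈ U, coeff (Finsupp.single o m) z ≠ 0 ∧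
      ∀ r s : Fin n, r ≠ o → s ≠ o → rot r s z = 0 := by
  have : FiniteDimensional ℝ (homogeneousSubmodule (Fin n) ℝ m) :=
    Module.Finite.iff_fg.2 (homogeneousSubmodule_fg (Fin n) ℝ m)
  have : FiniteDimensional ℝ U := Submodule.finiteDimensional_of_le hU
  obtain ⟨z, hz, hzf⟩ := exists_fischer_eq U (lcoeff ℝ (Finsupp.single o m))
  refine ⟨z, hz, fun h0 => hne ?_, fun r s hr hs => ?_⟩
  · have hz0 : z = 0 := eq_zero_of_fischer_self (by rw [hzf z hz]; exact h0)
    exact eq_zero_of_coeff_single_eq_zero hU hinv fun f hf => by simpa [hz0] using (hzf f hf).symm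
  · apply eq_zero_of_fischer_self
    rw [fischer_rot, hzf _ (hinv r s _ (hinv r s z hz)), lcoeff_apply, rot_apply, coeff_sub,
      coeff_X_mul_of_eq_zero (Finsupp.single_eq_of_ne hr),
      coeff_X_mul_of_eq_zero (Finsupp.single_eq_of_ne hs)]
    simp

end Zonal

/-- The harmonic homogeneous polynomials of degree `m`. -/
noncomputable def harmonicSubmodule (n m : ℕ) : Submodule ℝ (MvPolynomial (Fin n) ℝ) where
  carrier := {f | f.IsHomogeneous m ∧ lap f = 0}
  add_mem' := fun hf hg => ⟨hf.1.add hg.1, by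
    have h1 := hf.2
    have h2 := hg.2
    simp only [lap] at h1 h2
    simp [lap, Finset.sum_add_distrib, h1, h2]⟩
  zero_mem' := ⟨isHomogeneous_zero _ _ _, by simp [lap]⟩
  smul_mem' := fun c f hf => ⟨(homogeneousSubmodule (Fin n) ℝ m).smul_mem c hf.1, by
    have h1 := hf.2
    simp only [lap] at h1
    simp [lap, ← Finset.smul_sum, h1]⟩

lemma rot_mem_harmonic {n m : ℕ} (hm : m ≠ 0) (r s : Fin n) {f : MvPolynomial (Fin n) ℝ}
    (hf : f ∈ harmonicSubmodule n m) : rot r s f ∈ harmonicSubmodule n m :=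
  ⟨isHomogeneous_rot hm r s hf.1, by rw [lap_rot, hf.2, map_zero]⟩

/-- For `n ≥ 3` the space of harmonic polynomials of a given positive degree is an irreducible
module of the rotation Lie algebra. -/
theorem harmonic_irreducible {n m : ℕ} (hn : 3 ≤ n) (hm : m ≠ 0)
    {U : Submodule ℝ (MvPolynomial (Fin n) ℝ)} (hU : U ≤ harmonicSubmodule n m)
    (hinv : ∀ r s : Fin n, ∀ f ∈ U, rot r s f ∈ U) : U = ⊥ ∨ U = harmonicSubmodule n m := by
  have hhom : harmonicSubmodule n m ≤ homogeneousSubmodule (Fin n) ℝ m := fun f hf => hf.1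
  by_contra! hcon
  obtain ⟨hbot, htop⟩ := hcon
  let o : Fin n := ⟨0, by omega⟩
  let p : Fin n := ⟨1, by omega⟩
  let q : Fin n := ⟨2, by omega⟩
  let U' : Submodule ℝ (MvPolynomial (Fin n) ℝ) :=
    harmonicSubmodule n m ⊓ ⨅ u : U, LinearMap.ker (fischer n u)
  have hU' : U' ≤ harmonicSubmodule n m := inf_le_left
  have memU' (f : MvPolynomial (Fin n) ℝ) :
      f ∈ U' ↔ f ∈ harmonicSubmodule n m ∧ ∀ u ∈ U, fischer n u f = 0 := by
    simp [U', Submodule.mem_iInf]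
  have hinv' : ∀ r s : Fin n, ∀ f ∈ U', rot r s f ∈ U' := by
    intro r s f hf
    rw [memU'] at hf ⊢
    refine ⟨rot_mem_harmonic hm r s hf.1, fun u hu => ?_⟩
    rw [← neg_eq_zero, ← fischer_rot]
    exact hf.2 _ (hinv r s u hu)
  have hbot' : U' ≠ ⊥ := by
    intro hU'0
    refine htop (le_antisymm hU fun f hf => ?_)
    have : FiniteDimensional ℝ (homogeneousSubmodule (Fin n) ℝ m) :=
      Module.Finite.iff_fg.2 (homogeneousSubmodule_fg (Fin n) ℝ m)
    have : FiniteDimensional ℝ U := Submodule.finiteDimensional_of_le (hU.trans hhom)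
    obtain ⟨v, hv, hvf⟩ := exists_fischer_eq U (fischer n f)
    have h1 : f - v ∈ U' := (memU' _).2 ⟨Submodule.sub_mem _ hf (hU hv), fun u hu => by
      rw [map_sub, fischer_comm u v, hvf u hu, fischer_comm u f, sub_self]⟩
    rw [hU'0, Submodule.mem_bot, sub_eq_zero] at h1
    rwa [h1]
  obtain ⟨z, hz, hz0, hzrot⟩ := exists_zonal o (hU.trans hhom) hinv hbot
  obtain ⟨z', hz', hz0', hzrot'⟩ := exists_zonal o (hU'.trans hhom) hinv' hbot'
  set c := coeff (Finsupp.single o m) z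
  set c' := coeff (Finsupp.single o m) z'
  have hmem : c' • z - c • z' ∈ harmonicSubmodule n m :=
    Submodule.sub_mem _ (Submodule.smul_mem _ _ (hU hz)) (Submodule.smul_mem _ _ (hU' hz'))
  have heq : c' • z - c • z' = 0 :=
    zonal_eq_zero (o := o) (p := p) (q := q) (by simp [o, p]) (by simp [p, q]) (by simp [o, q])
      hmem.1 hmem.2 (fun r s hr hs => by simp [hzrot r s hr hs, hzrot' r s hr hs])
      (by simp only [coeff_sub, coeff_smul, smul_eq_mul]; exact sub_eq_zero.2 (mul_comm _ _))
  have hperp : fischer n z z = 0 := by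
    have h1 : c' * fischer n z z = 0 := by
      rw [← smul_eq_mul, ← map_smul, sub_eq_zero.1 heq, map_smul, ((memU' z').1 hz').2 z hz,
        smul_zero]
    exact (mul_eq_zero.1 h1).resolve_left hz0'
  exact hz0 (by simp [c, eq_zero_of_fischer_self hperp])

/-- `phiMap` as a linear map. -/
noncomputable def phiLinear (n : ℕ) (b : ℝ) (k : ℕ) :
    MvPolynomial (Fin n) ℝ →ₗ[ℝ] (Fin n → MvPolynomial (Fin n) ℝ) where
  toFun := phiMap b k
  map_add' := fun f g => by
    funext j
    simp only [phiMap, Pi.add_apply, map_add, smul_eq_C_mul]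
    ring
  map_smul' := fun c f => by
    funext j
    simp only [phiMap, Pi.smul_apply, Derivation.map_smul]
    simp only [smul_eq_C_mul, RingHom.id_apply]
    ring

/-- for `k ≥ 2`, `φ(H_{k−1})` is invariant under all `L_{r,s}` and is
irreducible: its only `L_{r,s}`-invariant ℝ-subspaces are `{0}` and itself. -/
theorem phiH_irreducible (n : ℕ) (hn : 3 ≤ n) (b : ℝ) (hb : b ≠ 0) (hb1 : 0 < b + 1)
    (k : ℕ) (hk : 2 ≤ k) :
    (∀ r s : Fin n, r < s → ∀ u ∈ phiH n b k, Lop r s u ∈ phiH n b k) ∧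
    (∀ W : Submodule ℝ (Fin n → MvPolynomial (Fin n) ℝ),
      (W : Set (Fin n → MvPolynomial (Fin n) ℝ)) ⊆ phiH n b k →
      (∀ r s : Fin n, r < s → ∀ u ∈ W, Lop r s u ∈ W) →
      (W : Set (Fin n → MvPolynomial (Fin n) ℝ)) = {0} ∨
        (W : Set (Fin n → MvPolynomial (Fin n) ℝ)) = phiH n b k) := by
  have hm : k - 1 ≠ 0 := by omega
  have hphi : phiH n b k = (harmonicSubmodule n (k - 1)).map (phiLinear n b k) := by
    ext z
    constructor
    · rintro ⟨f, hf, hl, rfl⟩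
      exact ⟨f, ⟨hf, hl⟩, rfl⟩
    · rintro ⟨f, ⟨hf, hl⟩, rfl⟩
      exact ⟨f, hf, hl, rfl⟩
  refine ⟨?_, fun W hW hinv => ?_⟩
  · rintro r s - u ⟨f, hf, hl, rfl⟩
    have h := rot_mem_harmonic hm r s (f := f) ⟨hf, hl⟩
    exact ⟨rot r s f, h.1, h.2, Lop_phiMap b k r s f⟩
  · rw [hphi] at hW ⊢
    let V := harmonicSubmodule n (k - 1) ⊓ W.comap (phiLinear n b k)
    have hmap : V.map (phiLinear n b k) = W := by
      refine le_antisymm (Submodule.map_le_iff_le_comap.2 inf_le_right) fun z hz => ?_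
      obtain ⟨f, hf, rfl⟩ := hW hz
      exact ⟨f, ⟨hf, hz⟩, rfl⟩
    have hrot (r s : Fin n) : ∀ f ∈ V, rot r s f ∈ V := fun f hf =>
      rot_mem (U := V) (fun r s hrs f hf => ⟨rot_mem_harmonic hm r s hf.1, by
        have h := hinv r s hrs _ hf.2
        change Lop r s (phiMap b k f) ∈ W at h
        rwa [Lop_phiMap] at h⟩) r s hf
    rcases harmonic_irreducible (U := V) hn hm inf_le_left hrot with h | h
    · left
      rw [← hmap, h, Submodule.map_bot, Submodule.bot_coe]
    · right
      rw [← hmap, h]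
end

section
/- Let p ≠ q be indices in {1,…,n} and k ≥ 0. The n-tuple of complex polynomials u with u_p = (x_p + i x_q)^k, u_q = i(x_p + i x_q)^k, and all other components 0, satisfies the complex Navier equations: Δu_j + b·∂_{x_j}(∑ᵣ ∂_{x_r} u_r) = 0 for all j. -/
open MvPolynomial

/-- The Laplacian `Δ = ∑ᵣ ∂²_{xᵣ}` on `ℂ[x₁,…,xₙ]`. -/
noncomputable def lapC {n : ℕ} (p : MvPolynomial (Fin n) ℂ) : MvPolynomial (Fin n) ℂ :=
  ∑ r : Fin n, pderiv r (pderiv r p)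

/-- The complexified Navier operator `N(u)ⱼ = Δuⱼ + b·∂_{xⱼ}(∑ᵣ ∂_{xᵣ} uᵣ)`. -/
noncomputable def navierC {n : ℕ} (b : ℝ) (u : Fin n → MvPolynomial (Fin n) ℂ) :
    Fin n → MvPolynomial (Fin n) ℂ :=
  fun j => lapC (u j) + C (b : ℂ) * pderiv j (∑ r : Fin n, pderiv r (u r))

section IsotropicLinearForm

variable {n : ℕ} {p q : Fin n}

lemma C_I_mul_C_I : (C Complex.I * C Complex.I : MvPolynomial (Fin n) ℂ) = -1 := by
  rw [← C_mul, Complex.I_mul_I, C_neg, C_1]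

/-- The partial derivatives of a power of the linear form `x_p + i x_q`. -/
lemma pderiv_isotropic_pow (r : Fin n) (k : ℕ) :
    pderiv r ((X p + C Complex.I * X q : MvPolynomial (Fin n) ℂ) ^ k) =
      (k : MvPolynomial (Fin n) ℂ) * (X p + C Complex.I * X q) ^ (k - 1) *
        ((if r = p then 1 else 0) + C Complex.I * (if r = q then 1 else 0)) := by
  simp [pderiv_X, Pi.single_apply, eq_comm, mul_assoc]

/-- Powers of `x_p + i x_q` with `p ≠ q` are harmonic. -/
lemma lapC_isotropic_pow (hpq : p ≠ q) (k : ℕ) :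
    lapC ((X p + C Complex.I * X q : MvPolynomial (Fin n) ℂ) ^ k) = 0 := by
  have second (r : Fin n) :
      pderiv r (pderiv r ((X p + C Complex.I * X q : MvPolynomial (Fin n) ℂ) ^ k)) =
        (k : MvPolynomial (Fin n) ℂ) * ((k - 1 : ℕ) : MvPolynomial (Fin n) ℂ) *
          (X p + C Complex.I * X q) ^ (k - 1 - 1) *
          ((if r = p then 1 else 0) - (if r = q then 1 else 0)) := by
    have hI := C_I_mul_C_I (n := n)
    rw [pderiv_isotropic_pow]
    by_cases hp : r = p
    · simp only [hp, hpq, if_true, if_false, mul_zero, add_zero, mul_one, sub_zero,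
        Derivation.leibniz, Derivation.map_natCast, pderiv_isotropic_pow, smul_eq_mul]
      ring
    · by_cases hq : r = q
      · simp only [hq, hpq.symm, if_true, if_false, zero_add, mul_one, zero_sub,
          Derivation.leibniz, Derivation.map_natCast, pderiv_isotropic_pow, smul_eq_mul, pderiv_C]
        linear_combination (k : MvPolynomial (Fin n) ℂ) * ((k - 1 : ℕ) : MvPolynomial (Fin n) ℂ) *
          (X p + C Complex.I * X q) ^ (k - 1 - 1) * hI
      · simp [hp, hq]
  simp only [lapC, second, ← Finset.mul_sum]
  simp

lemma lapC_C_mul (c : ℂ) (f : MvPolynomial (Fin n) ℂ) : lapC (C c * f) = C c * lapC f := by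
  simp [lapC, Finset.mul_sum]

/-- The field `(x_p + i x_q)^k (e_p + i e_q)` is divergence free. -/
lemma sum_pderiv_isotropic_field (hpq : p ≠ q) (k : ℕ) :
    ∑ r : Fin n, pderiv r
      (if r = p then (X p + C Complex.I * X q : MvPolynomial (Fin n) ℂ) ^ k
        else if r = q then C Complex.I * (X p + C Complex.I * X q) ^ k
        else 0) = 0 := by
  rw [Fintype.sum_eq_add p q hpq]
  · simp only [hpq, hpq.symm, if_true, if_false, pderiv_C_mul, pderiv_isotropic_pow]
    linear_combination (k : MvPolynomial (Fin n) ℂ) *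
      (X p + C Complex.I * X q) ^ (k - 1) * C_I_mul_C_I (n := n)
  · rintro r ⟨hp, hq⟩
    simp [hp, hq]

end IsotropicLinearForm

/-- for `p ≠ q` and any `k ≥ 0`, the tuple with `(x_p + i x_q)^k` in
position `p`, `i(x_p + i x_q)^k` in position `q` and `0` elsewhere satisfies the
complex Navier equations. -/
theorem navier_solution_v1 (n : ℕ) (hn : 3 ≤ n) (b : ℝ) (hb : b ≠ 0)
    (hb1 : 0 < b + 1) (p q : Fin n) (hpq : p ≠ q) (k : ℕ) :
    ∀ j, navierC b
      (fun r =>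
        if r = p then (X p + C Complex.I * X q) ^ k
        else if r = q then C Complex.I * (X p + C Complex.I * X q) ^ k
        else 0) j = 0 := by
  intro j
  simp only [navierC, sum_pderiv_isotropic_field hpq, map_zero, mul_zero, add_zero]
  split_ifs
  · exact lapC_isotropic_pow hpq k
  · rw [lapC_C_mul, lapC_isotropic_pow hpq, mul_zero]
  · simp [lapC]
end
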